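/- arXiv:2506.10604 — 2 statements merged into one kernel-verified Lean document; each statement's English description precedes it below -/
import Mathlib

section
/- For all integers k ≥ 3 and ℓ ≥ 2, let G_{k,ℓ} be the plane graph obtained from the Cartesian product of the cycle C_k and the path P_ℓ (drawn as ℓ nested k-cycles C⁰,…,C^{ℓ−1} with vertex ik+j on C^i joined to vertex (i+1)k+j on C^{i+1}) by adding, for each i ∈ {0,…,ℓ−2}, the k diagonal edges {ik+j, (i+1)k+j+1} for j ∈ {0,…,k−2} together with {ik+k−1, (i+1)k}. Then G_{k,ℓ} is a planar graph with f := 2k(ℓ−1)+2 faces which has exactly ℓ(ℓ+1)/2 CDCs of size f and exactly one true CDC of size f. Furthermore, G_{k,ℓ} is 3-connected when k = 3 and ℓ ≥ 3, and 4-connected otherwise. -/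
open SimpleGraph

attribute [local instance] Classical.propDecidable

/-- A cycle in a graph: a connected, 2-regular subgraph. -/
def IsCycleSubgraph {V : Type*} {G : SimpleGraph V} (C : G.Subgraph) : Prop :=
  C.coe.Connected ∧ ∀ v ∈ C.verts, (C.neighborSet v).ncard = 2

/-- A cycle double cover: a multiset of cycles covering every edge exactly twice
(counted with multiplicity). -/
def IsCDC {V : Type*} (G : SimpleGraph V) (S : Multiset G.Subgraph) : Prop :=
  (∀ C ∈ S, IsCycleSubgraph C) ∧
  ∀ e ∈ G.edgeSet, S.countP (fun C => e ∈ C.edgeSet) = 2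

/-- Graph minor relation (via branch sets). -/
def HasGraphMinor {V : Type*} {W : Type*} (G : SimpleGraph V) (H : SimpleGraph W) : Prop :=
  ∃ f : W → Set V,
    (∀ w, (f w).Nonempty) ∧
    (∀ w, (G.induce (f w)).Connected) ∧
    (Pairwise fun w₁ w₂ => Disjoint (f w₁) (f w₂)) ∧
    ∀ ⦃w₁ w₂⦄, H.Adj w₁ w₂ → ∃ v₁ ∈ f w₁, ∃ v₂ ∈ f w₂, G.Adj v₁ v₂

/-- Planarity, via Wagner's theorem: no `K₅` minor and no `K_{3,3}` minor. -/
def IsPlanar {V : Type*} (G : SimpleGraph V) : Prop :=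
  ¬ HasGraphMinor G (completeGraph (Fin 5)) ∧
  ¬ HasGraphMinor G (completeBipartiteGraph (Fin 3) (Fin 3))

/-- `k`-connectivity: more than `k` vertices, and removing fewer than `k`
vertices leaves a connected graph. -/
def IsKConnected {V : Type*} [Fintype V] (k : ℕ) (G : SimpleGraph V) : Prop :=
  k < Fintype.card V ∧ ∀ s : Set V, s.ncard < k → (G.induce sᶜ).Connected

/-- A Hamiltonian cycle: a cycle through all vertices. -/
def IsHamCycle {V : Type*} (G : SimpleGraph V) (C : G.Subgraph) : Prop :=
  IsCycleSubgraph C ∧ C.verts = Set.univ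

/-- The graph `G_{k,ℓ}`: `ℓ` nested `k`-cycles (row `i`, vertices `(i, j)` for
`j ∈ ZMod k`), with vertical edges `(i,j)–(i+1,j)` and diagonal edges
`(i,j)–(i+1,j+1)` between consecutive cycles. -/
def Gkl (k l : ℕ) : SimpleGraph (Fin l × ZMod k) :=
  SimpleGraph.fromRel fun p q =>
    (p.1 = q.1 ∧ q.2 = p.2 + 1) ∨
    ((q.1 : ℕ) = (p.1 : ℕ) + 1 ∧ (q.2 = p.2 ∨ q.2 = p.2 + 1))

/-!
Planarity. A multigraph `sides` on the faces, with the same edges as `G_{k,ℓ}`, has cut space equal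
to the cycle space of `G_{k,ℓ}` over `ZMod 2`: the inclusion holds as every face boundary is even,
and Euler's formula makes the dimensions agree. Such an algebraic dual is inherited by every minor,
and double counting edges against faces shows that `K₅` and `K_{3,3}` have none.

Cycle double covers. Give the edges of the cycles `C^i` weight `2` and all other edges weight
`k - 1`. Every cycle then weighs at least `2k`, with equality exactly for the `C^i` and the
triangles, and twice the total weight is `2k` times the prescribed size. So in a double cover of
that size only the `C^i` and triangles occur. Going outwards from one cycle `C^i` to the next, the
number of chosen triangles with an edge on the inner cycle drops exactly by the multiplicity of
`C^i`, from `2` to `0`. Hence the double cover is determined by a multiset of two rows, and every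
such multiset occurs. No cycle is used twice exactly when the two rows are the innermost and the
outermost one.
-/

/-! ### Orthogonal complements for the dot product -/

section DotProduct

variable {K : Type*} [Field K] {E : Type*} [Fintype E]

/-- The orthogonal complement of a space of vectors with respect to the dot product. Cuts and
cycles of a graph, as subspaces of `E → ZMod 2`, are each other's orthogonal complements. -/
def dotOrthogonal (U : Submodule K (E → K)) : Submodule K (E → K) :=
  LinearMap.BilinForm.orthogonal (dotProductBilin K K) U

lemma dotOrthogonal_anti {U W : Submodule K (E → K)} (h : U ≤ W) :
    dotOrthogonal W ≤ dotOrthogonal U :=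
  LinearMap.BilinForm.orthogonal_le h

lemma isRefl_dotProductBilin :
    LinearMap.IsRefl (dotProductBilin K K : LinearMap.BilinForm K (E → K)) :=
  fun x y h => (dotProduct_comm y x).trans h

lemma nondegenerate_dotProductBilin :
    LinearMap.BilinForm.Nondegenerate (dotProductBilin K K : LinearMap.BilinForm K (E → K)) :=
  isRefl_dotProductBilin.nondegenerate_iff_separatingLeft.mpr fun x hx => dotProduct_eq_zero x hx

lemma dotOrthogonal_dotOrthogonal (U : Submodule K (E → K)) :
    dotOrthogonal (dotOrthogonal U) = U :=
  LinearMap.BilinForm.orthogonal_orthogonal nondegenerate_dotProductBilin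
    (fun _ _ => isRefl_dotProductBilin _ _) U

lemma finrank_add_finrank_dotOrthogonal (U : Submodule K (E → K)) :
    Module.finrank K U + Module.finrank K (dotOrthogonal U) = Fintype.card E := by
  have h := LinearMap.BilinForm.finrank_orthogonal nondegenerate_dotProductBilin U
  have hle := Submodule.finrank_le U
  rw [Module.finrank_fintype_fun_eq_card] at h hle
  rw [dotOrthogonal, h, Nat.add_sub_cancel' hle]

lemma dotOrthogonal_inf (U W : Submodule K (E → K)) :
    dotOrthogonal (U ⊓ W) = dotOrthogonal U ⊔ dotOrthogonal W := by
  refine le_antisymm ?_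
    (sup_le (dotOrthogonal_anti inf_le_left) (dotOrthogonal_anti inf_le_right))
  rw [← dotOrthogonal_dotOrthogonal (dotOrthogonal U ⊔ dotOrthogonal W)]
  refine dotOrthogonal_anti (le_inf ?_ ?_)
  · exact (dotOrthogonal_anti le_sup_left).trans (dotOrthogonal_dotOrthogonal U).le
  · exact (dotOrthogonal_anti le_sup_right).trans (dotOrthogonal_dotOrthogonal W).le

/-- The space of vectors vanishing on a set of coordinates. -/
def vanishingOn (K : Type*) [Field K] (C : Set E) : Submodule K (E → K) :=
  Submodule.pi C fun _ => ⊥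

lemma dotOrthogonal_vanishingOn_le (C : Set E) :
    dotOrthogonal (vanishingOn K C) ≤ vanishingOn K Cᶜ := by
  classical
  intro z hz e he
  have h := hz (Pi.single e 1) fun c hc => Pi.single_eq_of_ne (ne_of_mem_of_not_mem hc he) _
  exact (single_one_dotProduct e z).symm.trans h

lemma comp_dotProduct_comp {ε : Type*} [Fintype ε] {ι : ε → E} (hι : Function.Injective ι)
    {u v : E → K} (h : ∀ e ∉ Set.range ι, u e * v e = 0) : (u ∘ ι) ⬝ᵥ (v ∘ ι) = u ⬝ᵥ v :=
  Fintype.sum_of_injective ι hι _ _ h fun _ => rfl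

-- Contracting `C` and deleting all other edges outside the range of `ι` turns orthogonal
-- complements into orthogonal complements, the two operations being interchanged.
lemma dotOrthogonal_map_funLeft {ε : Type*} [Fintype ε] {ι : ε → E} (hι : Function.Injective ι)
    (U : Submodule K (E → K)) {C : Set E} (hC : Disjoint (Set.range ι) C) :
    dotOrthogonal ((U ⊓ vanishingOn K C).map (LinearMap.funLeft K K ι)) =
      (dotOrthogonal U ⊓ vanishingOn K (Set.range ι ∪ C)ᶜ).map (LinearMap.funLeft K K ι) := by
  ext w
  constructor
  · intro hw
    have hw₀ : Function.extend ι w 0 ∈ dotOrthogonal (U ⊓ vanishingOn K C) := fun u hu => by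
      refine (comp_dotProduct_comp hι fun e he => ?_).symm.trans ((congrArg _ ?_).trans
        (hw _ ⟨u, hu, rfl⟩))
      · rw [Function.extend_apply' _ _ _ he, Pi.zero_apply, mul_zero]
      · exact Function.extend_comp hι w 0
    rw [dotOrthogonal_inf] at hw₀
    obtain ⟨v, hv, z, hz, hvz⟩ := Submodule.mem_sup.mp hw₀
    have hvw : ∀ e ∉ C, v e = Function.extend ι w 0 e := fun e he => by
      rw [← hvz, Pi.add_apply, dotOrthogonal_vanishingOn_le C hz e he, add_zero]
    refine ⟨v, ⟨hv, fun e he => ?_⟩, funext fun e => ?_⟩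
    · rw [Set.mem_compl_iff, Set.mem_union, not_or] at he
      exact (hvw e he.2).trans (Function.extend_apply' _ _ _ he.1)
    · exact (hvw _ (hC.notMem_of_mem_left ⟨e, rfl⟩)).trans (hι.extend_apply _ _ _)
  · rintro ⟨v, ⟨hv, hvD⟩, rfl⟩ _ ⟨u, ⟨hu, huC⟩, rfl⟩
    refine (comp_dotProduct_comp hι fun e he => ?_).trans (hv u hu)
    by_cases heC : e ∈ C
    · exact mul_eq_zero_of_left (huC e heC) _
    · exact mul_eq_zero_of_right _ (hvD e (not_or_intro he heC))

end DotProduct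

/-! ### Cuts, cycles and algebraic duals of multigraphs -/

section CutSpace

variable {V W F E ε : Type*}

/-- The sum mod 2 of a vertex labelling over the two ends of an edge. -/
def endSum (x : V → ZMod 2) : Sym2 V → ZMod 2 :=
  Sym2.lift ⟨fun u v => x u + x v, fun _ _ => add_comm _ _⟩

@[simp] lemma endSum_mk (x : V → ZMod 2) (u v : V) : endSum x s(u, v) = x u + x v := rfl

lemma endSum_map (f : V → W) (x : W → ZMod 2) (p : Sym2 V) :
    endSum x (p.map f) = endSum (x ∘ f) p := by
  induction p with
  | _ u v => rfl

lemma endSum_congr {x x' : V → ZMod 2} {p : Sym2 V} (h : ∀ v ∈ p, x v = x' v) :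
    endSum x p = endSum x' p := by
  induction p with
  | _ u v => rw [endSum_mk, endSum_mk, h u (Sym2.mem_mk_left u v), h v (Sym2.mem_mk_right u v)]

/-- The coboundary map mod 2 of the multigraph whose edge `e` joins the two members of `ends e`.
All multigraphs here are given by such a map `ends`; loops are allowed. -/
def coboundary (ends : E → Sym2 V) : (V → ZMod 2) →ₗ[ZMod 2] (E → ZMod 2) where
  toFun x e := endSum x (ends e)
  map_add' x y := funext fun e => by
    induction h : ends e with
    | _ u v => simp only [h, endSum_mk, Pi.add_apply]; abel
  map_smul' c x := funext fun e => by
    induction h : ends e with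
    | _ u v => simp only [h, endSum_mk, Pi.smul_apply, smul_add, RingHom.id_apply]

lemma coboundary_apply (ends : E → Sym2 V) (x : V → ZMod 2) (e : E) :
    coboundary ends x e = endSum x (ends e) := rfl

lemma coboundary_eq_zero_iff {ends : E → Sym2 V} {x : V → ZMod 2} {e : E} {u v : V}
    (h : ends e = s(u, v)) : coboundary ends x e = 0 ↔ x u = x v := by
  rw [coboundary_apply, h, endSum_mk, CharTwo.add_eq_zero]

/-- The cut space mod 2 of a multigraph. -/
def cutSpace (ends : E → Sym2 V) : Submodule (ZMod 2) (E → ZMod 2) :=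
  LinearMap.range (coboundary ends)

/-- The cycle space mod 2 of a multigraph: the vectors that meet every cut evenly. -/
def cycleSpace [Fintype E] (ends : E → Sym2 V) : Submodule (ZMod 2) (E → ZMod 2) :=
  dotOrthogonal (cutSpace ends)

lemma mem_cycleSpace [Fintype E] {ends : E → Sym2 V} {X : E → ZMod 2} :
    X ∈ cycleSpace ends ↔ ∀ x, coboundary ends x ⬝ᵥ X = 0 :=
  Set.forall_mem_range

/-- The multigraph `sides` is an algebraic dual, in the sense of Whitney, of the multigraph `ends`
with the same edges. For a plane graph, `sides e` is the pair of faces at the edge `e`. -/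
def IsAlgebraicDual [Fintype E] (ends : E → Sym2 V) (sides : E → Sym2 F) : Prop :=
  cycleSpace ends = cutSpace sides

lemma cutSpace_map_mk_eq (sides : E → Sym2 F) (D : Set E) (ι : ε → E) :
    cutSpace (fun e => (sides (ι e)).map (Quot.mk fun f g => ∃ d ∈ D, sides d = s(f, g))) =
      (cutSpace sides ⊓ vanishingOn (ZMod 2) D).map (LinearMap.funLeft _ _ ι) := by
  ext X
  constructor
  · rintro ⟨y, rfl⟩
    refine ⟨_, ⟨⟨y ∘ Quot.mk _, rfl⟩, fun d hd => ?_⟩, funext fun e => (endSum_map _ _ _).symm⟩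
    induction h : sides d with
    | _ f g =>
      exact (coboundary_eq_zero_iff h).mpr (congrArg y (Quot.sound ⟨d, hd, h⟩))
  · rintro ⟨_, ⟨⟨x, rfl⟩, hx⟩, rfl⟩
    exact ⟨Quot.lift x fun f g ⟨d, hd, h⟩ => (coboundary_eq_zero_iff h).mp (hx d hd),
      funext fun e => endSum_map _ _ _⟩

lemma cutSpace_eq_of_contraction {ends : E → Sym2 V} {ends' : ε → Sym2 W} {π : V → Option W}
    {ι : ε → E} (hι : ∀ e, (ends (ι e)).map π = (ends' e).map some) {C : Set E}
    (hC : ∀ e ∈ C, ∃ w, (ends e).map π = s(some w, some w)) (hπ : ∀ w, ∃ v, π v = some w)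
    (hconn : ∀ x : V → ZMod 2, (∀ e ∈ C, coboundary ends x e = 0) →
      ∀ u v w, π u = some w → π v = some w → x u = x v) :
    cutSpace ends' = (cutSpace ends ⊓ vanishingOn (ZMod 2) C).map (LinearMap.funLeft _ _ ι) := by
  have hext : ∀ (y : Option W → ZMod 2) (e : ε),
      endSum (y ∘ π) (ends (ι e)) = endSum (y ∘ some) (ends' e) := fun y e => by
    rw [← endSum_map, hι, endSum_map]
  ext X
  constructor
  · rintro ⟨y, rfl⟩
    refine ⟨_, ⟨⟨fun v => (π v).elim 0 y, rfl⟩, fun e he => ?_⟩,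
      funext fun e => hext (Option.elim · 0 y) e⟩
    obtain ⟨w, hw⟩ := hC e he
    rw [coboundary_apply]
    refine (endSum_map π (Option.elim · 0 y) _).symm.trans ?_
    rw [hw]
    exact CharTwo.add_self_eq_zero _
  · rintro ⟨_, ⟨⟨x, rfl⟩, hx⟩, rfl⟩
    choose rep hrep using hπ
    refine ⟨x ∘ rep, funext fun e => (hext (Option.elim · 0 (x ∘ rep)) e).symm.trans ?_⟩
    refine endSum_congr fun v hv => ?_
    have hv' : π v ∈ (ends' e).map some := hι e ▸ Sym2.mem_map.mpr ⟨v, hv, rfl⟩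
    obtain ⟨w, -, hw⟩ := Sym2.mem_map.mp hv'
    simpa only [Function.comp_apply, ← hw, Option.elim_some] using
      hconn x hx (rep w) v w (hrep w) hw.symm

end CutSpace

section Minor

universe u

variable {V W E : Type*} {F : Type u} {G : SimpleGraph V} {H : SimpleGraph W}

lemma HasGraphMinor.exists_partialMap (h : HasGraphMinor G H) :
    ∃ π : V → Option W, (∀ w, (G.induce {v | π v = some w}).Connected) ∧
      ∀ p ∈ H.edgeSet, ∃ q ∈ G.edgeSet, q.map π = p.map some := by
  obtain ⟨B, -, hconn, hdisj, hadj⟩ := h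
  have hex : ∀ v, ∃ o : Option W, ∀ w, o = some w ↔ v ∈ B w := fun v => by
    by_cases hv : ∃ w, v ∈ B w
    · obtain ⟨w, hw⟩ := hv
      refine ⟨some w, fun w' => ⟨fun h => Option.some_inj.mp h ▸ hw, fun hw' => ?_⟩⟩
      by_contra hne
      exact (hdisj fun h => hne (congrArg some h)).notMem_of_mem_left hw hw'
    · exact ⟨none, fun w => ⟨fun h => (Option.some_ne_none w h.symm).elim,
        fun hw => (hv ⟨w, hw⟩).elim⟩⟩
  choose π hπ using hex
  refine ⟨π, fun w => ?_, fun p hp => ?_⟩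
  · rw [show {v | π v = some w} = B w from Set.ext fun v => hπ v w]
    exact hconn w
  · induction p with
    | _ w₁ w₂ =>
      obtain ⟨v₁, h₁, v₂, h₂, h⟩ := hadj hp
      exact ⟨s(v₁, v₂), h, by simp only [Sym2.map_mk, (hπ _ _).mpr h₁, (hπ _ _).mpr h₂]⟩

lemma eq_of_connected_induce {α : Type*} {s : Set V} (hs : (G.induce s).Connected) {x : V → α}
    (hx : ∀ u ∈ s, ∀ v ∈ s, G.Adj u v → x u = x v) {u v : V} (hu : u ∈ s) (hv : v ∈ s) :
    x u = x v := by
  obtain ⟨p⟩ := hs.preconnected ⟨u, hu⟩ ⟨v, hv⟩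
  have key : ∀ {a b : s}, (G.induce s).Walk a b → x a = x b := fun p => by
    induction p with
    | nil => rfl
    | cons h _ ih => exact (hx _ (Subtype.prop _) _ (Subtype.prop _) h).trans ih
  exact key p

lemma HasGraphMinor.exists_isAlgebraicDual [Fintype E] [Fintype H.edgeSet] [Finite F]
    (h : HasGraphMinor G H) {ends : E → Sym2 V} {sides : E → Sym2 F}
    (hends : Set.range ends = G.edgeSet) (hdual : IsAlgebraicDual ends sides) :
    ∃ (F' : Type u) (_ : Finite F') (sides' : H.edgeSet → Sym2 F'),
      IsAlgebraicDual (Subtype.val : H.edgeSet → Sym2 W) sides' := by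
  obtain ⟨π, hconn, hedge⟩ := h.exists_partialMap
  have hedge' : ∀ p : H.edgeSet, ∃ e, (ends e).map π = p.1.map some := fun p => by
    obtain ⟨q, hq, hqp⟩ := hedge p p.2
    rw [← hends] at hq
    obtain ⟨e, rfl⟩ := hq
    exact ⟨e, hqp⟩
  choose ι hι using hedge'
  have hιinj : Function.Injective ι := fun p q hpq =>
    Subtype.ext (Sym2.map.injective (Option.some_injective W) ((hι p).symm.trans (hpq ▸ hι q)))
  let C : Set E := {e | ∃ w, (ends e).map π = s(some w, some w)}
  have hC : Disjoint (Set.range ι) C := by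
    rw [Set.disjoint_left]
    rintro _ ⟨⟨p, hp⟩, rfl⟩ ⟨w, hw⟩
    rw [hι] at hw
    induction p with
    | _ w₁ w₂ =>
      simp only [Sym2.map_mk, Sym2.eq_iff, Option.some_inj, or_self] at hw
      exact H.ne_of_adj hp (hw.1.trans hw.2.symm)
  have hconst : ∀ x : V → ZMod 2, (∀ e ∈ C, coboundary ends x e = 0) →
      ∀ u v w, π u = some w → π v = some w → x u = x v := fun x hx u v w hu hv => by
    refine eq_of_connected_induce (hconn w) (fun a ha b hb hab => ?_) hu hv
    obtain ⟨e, he⟩ : s(a, b) ∈ Set.range ends := hends ▸ hab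
    refine (coboundary_eq_zero_iff he).mp (hx e ⟨w, ?_⟩)
    rw [he, Sym2.map_mk, show π a = some w from ha, show π b = some w from hb]
  let r : F → F → Prop := fun f g => ∃ d ∈ (Set.range ι ∪ C)ᶜ, sides d = s(f, g)
  refine ⟨Quot r, inferInstance, fun p => (sides (ι p)).map (Quot.mk r), ?_⟩
  rw [IsAlgebraicDual, cycleSpace, cutSpace_eq_of_contraction hι (fun e (he : e ∈ C) => he)
    (fun w => (hconn w).nonempty.elim fun v => ⟨v.1, v.2⟩) hconst,
    dotOrthogonal_map_funLeft hιinj _ hC, cutSpace_map_mk_eq, ← hdual, cycleSpace]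

end Minor

section EulerCount

open Module

variable {V W F E : Type*}

lemma mem_of_coboundary_single_ne_zero {ends : E → Sym2 V} {v : V} {e : E}
    (h : coboundary ends (Pi.single v 1) e ≠ 0) : v ∈ ends e := by
  by_contra hv
  refine h ((endSum_congr (x' := 0) fun u hu => ?_).trans ?_)
  · exact Pi.single_eq_of_ne (ne_of_mem_of_not_mem hu hv) _
  · induction ends e with
    | _ => exact add_zero 0

lemma finrank_cutSpace_lt_card [Finite V] (ends : E → Sym2 V) {S : Finset V} (hS : S.Nonempty)
    (h : ∀ v ∉ S, coboundary ends (Pi.single v 1) = 0) :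
    finrank (ZMod 2) (cutSpace ends) < S.card := by
  have := Fintype.ofFinite V
  obtain ⟨v₀, hv₀⟩ := hS
  let star : V → E → ZMod 2 := fun v => coboundary ends (Pi.single v 1)
  have hle : cutSpace ends ≤ Submodule.span (ZMod 2) ((S.erase v₀).image star : Finset _) := by
    rintro _ ⟨x, rfl⟩
    have hshift : coboundary ends x = coboundary ends (x + Function.const V (x v₀)) := by
      rw [map_add]
      refine (add_eq_left.mpr (funext fun e => ?_)).symm
      induction he : ends e with
      | _ u v => exact (coboundary_eq_zero_iff he).mpr rfl
    rw [hshift, pi_eq_sum_univ' (x + Function.const V (x v₀)), map_sum]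
    refine Submodule.sum_mem _ fun v _ => ?_
    rw [map_smul]
    by_cases hv : v = v₀
    · rw [hv, Pi.add_apply, Function.const_apply, CharTwo.add_self_eq_zero, zero_smul]
      exact Submodule.zero_mem _
    · refine Submodule.smul_mem _ _ ?_
      by_cases hvS : v ∈ S
      · exact Submodule.subset_span
          (Finset.mem_coe.mpr (Finset.mem_image_of_mem _ (Finset.mem_erase.mpr ⟨hv, hvS⟩)))
      · rw [h v hvS]
        exact Submodule.zero_mem _
  calc finrank (ZMod 2) (cutSpace ends)
      ≤ ((S.erase v₀).image star).card :=
        (Submodule.finrank_mono hle).trans (finrank_span_finset_le_card _)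
    _ ≤ (S.erase v₀).card := Finset.card_image_le
    _ < S.card := Finset.card_erase_lt_of_mem hv₀

lemma card_le_finrank_cutSpace_add_one [Fintype V] {ends : E → Sym2 V}
    (hconn : ∀ x, coboundary ends x = 0 → ∀ u v, x u = x v) :
    Fintype.card V ≤ finrank (ZMod 2) (cutSpace ends) + 1 := by
  rcases isEmpty_or_nonempty V with hV | ⟨⟨v₀⟩⟩
  · simp
  have hone : (1 : V → ZMod 2) ∈ LinearMap.ker (coboundary ends) := funext fun e => by
    induction he : ends e with
    | _ u v => exact (coboundary_eq_zero_iff he).mpr rfl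
  have hker : finrank (ZMod 2) (LinearMap.ker (coboundary ends)) ≤ 1 :=
    finrank_le_one ⟨1, hone⟩ fun x => ⟨x.1 v₀, Subtype.ext (funext fun v => by
      simpa using hconn x.1 x.2 v₀ v)⟩
  have hrank := LinearMap.finrank_range_add_finrank_ker (coboundary ends)
  rw [Module.finrank_fintype_fun_eq_card] at hrank
  exact hrank ▸ Nat.add_le_add_left hker _

variable [Fintype E]

lemma IsAlgebraicDual.of_euler [Fintype V] [Fintype F] {ends : E → Sym2 V} {sides : E → Sym2 F}
    (hle : cutSpace sides ≤ cycleSpace ends)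
    (hconn : ∀ x, coboundary ends x = 0 → ∀ u v, x u = x v)
    (hconn' : ∀ x, coboundary sides x = 0 → ∀ f g, x f = x g)
    (heuler : Fintype.card E + 2 ≤ Fintype.card V + Fintype.card F) :
    IsAlgebraicDual ends sides := by
  refine (Submodule.eq_of_le_of_finrank_le hle ?_).symm
  have hV := card_le_finrank_cutSpace_add_one hconn
  have hF := card_le_finrank_cutSpace_add_one hconn'
  have hE := finrank_add_finrank_dotOrthogonal (cutSpace ends)
  rw [cycleSpace]
  omega

lemma sum_hammingNorm_coboundary_single_le (sides : E → Sym2 F) (S : Finset F) :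
    ∑ f ∈ S, hammingNorm (coboundary sides (Pi.single f 1)) ≤ 2 * Fintype.card E := by
  calc _ = ∑ e, (S.filter fun f => coboundary sides (Pi.single f 1) e ≠ 0).card :=
        Finset.sum_card_bipartiteAbove_eq_sum_card_bipartiteBelow _
    _ ≤ ∑ e, (sides e).toFinset.card := Finset.sum_le_sum fun e _ => Finset.card_le_card
        fun f hf => Sym2.mem_toFinset.mpr
          (mem_of_coboundary_single_ne_zero (Finset.mem_filter.mp hf).2)
    _ ≤ ∑ _e : E, 2 := Finset.sum_le_sum fun e _ => by rw [Sym2.card_toFinset]; split <;> omega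
    _ = 2 * Fintype.card E := by simp [mul_comm]

/-- The Euler-type bound behind the nonplanarity of `K₅` and `K_{3,3}`: a face of the dual is an
even edge set, so it has at least `g` edges. -/
lemma IsAlgebraicDual.girth_mul_le [Fintype W] [Nonempty W] [Finite F] {ends : E → Sym2 W}
    {sides : E → Sym2 F} (hdual : IsAlgebraicDual ends sides) {g : ℕ}
    (hgirth : ∀ X ∈ cycleSpace ends, X ≠ 0 → g ≤ hammingNorm X)
    (hcard : Fintype.card W ≤ Fintype.card E) :
    g * (Fintype.card E + 2) ≤ 2 * Fintype.card E + g * Fintype.card W := by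
  have := Fintype.ofFinite F
  let S : Finset F := Finset.univ.filter fun f => coboundary sides (Pi.single f 1) ≠ 0
  have hW : finrank (ZMod 2) (cutSpace ends) < Fintype.card W :=
    finrank_cutSpace_lt_card ends Finset.univ_nonempty fun v hv => absurd (Finset.mem_univ v) hv
  have hE := finrank_add_finrank_dotOrthogonal (cutSpace ends)
  rw [← cycleSpace, hdual] at hE
  have hstar : ∀ f ∉ S, coboundary sides (Pi.single f 1) = 0 := fun f hf => by
    simpa [S] using hf
  have hS : S.Nonempty := by
    by_contra hS
    have hzero : coboundary sides = 0 := LinearMap.pi_ext' fun f => LinearMap.ext_ring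
      (hstar f (Finset.not_nonempty_iff_eq_empty.mp hS ▸ Finset.notMem_empty f))
    rw [cutSpace, cutSpace, hzero, LinearMap.range_zero, finrank_bot] at hE
    rw [cutSpace] at hW
    omega
  have hF := finrank_cutSpace_lt_card sides hS hstar
  have hfaces : S.card * g ≤ 2 * Fintype.card E := by
    refine (S.card_nsmul_le_sum _ g fun f hf => hgirth _ ?_ ?_).trans
      (sum_hammingNorm_coboundary_single_le sides S)
    · exact hdual ▸ ⟨_, rfl⟩
    · exact (Finset.mem_filter.mp hf).2
  nlinarith [Nat.mul_le_mul_left g (show Fintype.card E + 2 ≤ S.card + Fintype.card W by omega)]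

end EulerCount

section Girth

variable {V E : Type*} [Fintype E]

lemma exists_ne_of_mem_cycleSpace {ends : E → Sym2 V} {X : E → ZMod 2}
    (hX : X ∈ cycleSpace ends) {x : V → ZMod 2} {e : E} (he : X e ≠ 0)
    (hx : coboundary ends x e ≠ 0) : ∃ e' ≠ e, X e' ≠ 0 ∧ coboundary ends x e' ≠ 0 := by
  by_contra! h
  refine mul_ne_zero hx he ?_
  rw [← mem_cycleSpace.mp hX x, dotProduct, Fintype.sum_eq_single e fun e' he' => ?_]
  by_cases h0 : X e' = 0
  · exact mul_eq_zero_of_right _ h0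
  · exact mul_eq_zero_of_left (h e' he' h0) _

lemma three_le_hammingNorm {ends : E → Sym2 V} (hinj : Function.Injective ends)
    (hloop : ∀ e, ¬ (ends e).IsDiag) {X : E → ZMod 2} (hX : X ∈ cycleSpace ends) (h0 : X ≠ 0) :
    3 ≤ hammingNorm X := by
  obtain ⟨e, he⟩ := Function.ne_iff.mp h0
  induction h : ends e with
  | _ u v =>
    have huv : u ≠ v := fun huv => hloop e (h ▸ huv)
    have hend : ∀ w ∈ ends e, ∃ e' ≠ e, X e' ≠ 0 ∧ w ∈ ends e' := fun w hw => by
      have hw' : coboundary ends (Pi.single w 1) e ≠ 0 := by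
        rw [h, Sym2.mem_iff] at hw
        rw [Ne, coboundary_eq_zero_iff h]
        rcases hw with rfl | rfl <;> simp [huv, huv.symm]
      obtain ⟨e', hne, hXe', hwe'⟩ := exists_ne_of_mem_cycleSpace hX he hw'
      exact ⟨e', hne, hXe', mem_of_coboundary_single_ne_zero hwe'⟩
    obtain ⟨e₁, hne₁, he₁, hu⟩ := hend u (h ▸ Sym2.mem_mk_left u v)
    obtain ⟨e₂, hne₂, he₂, hv⟩ := hend v (h ▸ Sym2.mem_mk_right u v)
    have h₁₂ : e₁ ≠ e₂ := fun h₁₂ => hne₁ (hinj (((Sym2.mem_and_mem_iff huv).mp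
      ⟨hu, h₁₂ ▸ hv⟩).trans h.symm))
    exact Finset.two_lt_card.mpr ⟨e, by simpa using he, e₁, by simpa using he₁, e₂,
      by simpa using he₂, hne₁.symm, hne₂.symm, h₁₂⟩

lemma zmod_two_eq_one_of_ne_zero {a : ZMod 2} (h : a ≠ 0) : a = 1 :=
  Fin.eq_one_of_ne_zero a h

lemma natCast_hammingNorm (X : E → ZMod 2) : (hammingNorm X : ZMod 2) = ∑ e, X e := by
  rw [hammingNorm, Finset.card_eq_sum_ones, Nat.cast_sum, Finset.sum_filter]
  refine Finset.sum_congr rfl fun e _ => ?_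
  rw [Nat.cast_one]
  split_ifs with h
  · exact (zmod_two_eq_one_of_ne_zero h).symm
  · exact (not_not.mp h).symm

lemma even_hammingNorm_of_one_mem_cutSpace {ends : E → Sym2 V} (h1 : 1 ∈ cutSpace ends)
    {X : E → ZMod 2} (hX : X ∈ cycleSpace ends) :
    Even (hammingNorm X) := by
  rw [← ZMod.natCast_eq_zero_iff_even, natCast_hammingNorm, ← one_dotProduct]
  exact hX 1 h1

lemma four_le_hammingNorm {ends : E → Sym2 V} (hinj : Function.Injective ends)
    (hloop : ∀ e, ¬ (ends e).IsDiag) (h1 : 1 ∈ cutSpace ends) {X : E → ZMod 2}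
    (hX : X ∈ cycleSpace ends) (h0 : X ≠ 0) : 4 ≤ hammingNorm X := by
  obtain ⟨r, hr⟩ := even_hammingNorm_of_one_mem_cutSpace h1 hX
  have := three_le_hammingNorm hinj hloop hX h0
  omega

end Girth

section Planarity

variable {V W E F : Type*} {G : SimpleGraph V} {H : SimpleGraph W}

lemma not_hasGraphMinor_of_girth [Fintype E] [Finite F] [Fintype W] [Nonempty W]
    [Fintype H.edgeSet] {ends : E → Sym2 V} {sides : E → Sym2 F}
    (hends : Set.range ends = G.edgeSet) (hdual : IsAlgebraicDual ends sides) {g : ℕ}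
    (hgirth : ∀ X ∈ cycleSpace (Subtype.val : H.edgeSet → Sym2 W), X ≠ 0 →
      g ≤ hammingNorm X)
    (hcard : Fintype.card W ≤ Fintype.card H.edgeSet)
    (hlt : 2 * Fintype.card H.edgeSet + g * Fintype.card W < g * (Fintype.card H.edgeSet + 2)) :
    ¬ HasGraphMinor G H := fun h => by
  obtain ⟨F', _, sides', hdual'⟩ := h.exists_isAlgebraicDual hends hdual
  exact absurd (hdual'.girth_mul_le hgirth hcard) hlt.not_ge

lemma one_mem_cutSpace_completeBipartiteGraph (V W : Type*) :
    1 ∈ cutSpace (Subtype.val : (completeBipartiteGraph V W).edgeSet → Sym2 (V ⊕ W)) := by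
  refine ⟨Sum.elim 0 1, funext fun ⟨p, hp⟩ => ?_⟩
  rw [coboundary_apply, Pi.one_apply]
  induction p with
  | _ u v =>
    rcases u with u | u <;> rcases v with v | v <;> simp at hp ⊢

/-- One direction of Whitney's planarity criterion. -/
lemma isPlanar_of_isAlgebraicDual [Fintype E] [Finite F] {ends : E → Sym2 V} {sides : E → Sym2 F}
    (hends : Set.range ends = G.edgeSet) (hdual : IsAlgebraicDual ends sides) : IsPlanar G := by
  constructor
  · have hE : Fintype.card (completeGraph (Fin 5)).edgeSet = 10 := by
      rw [← SimpleGraph.edgeFinset_card]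
      exact SimpleGraph.card_edgeFinset_top_eq_card_choose_two
    refine not_hasGraphMinor_of_girth hends hdual (g := 3) (fun X hX h0 => three_le_hammingNorm
      Subtype.val_injective (fun e => SimpleGraph.not_isDiag_of_mem_edgeSet _ e.2) hX h0) ?_ ?_ <;>
    · rw [hE]; simp
  · have hE : Fintype.card (completeBipartiteGraph (Fin 3) (Fin 3)).edgeSet = 9 := by
      have h := SimpleGraph.encard_edgeSet_completeBipartiteGraph (W₁ := Fin 3) (W₂ := Fin 3)
      rw [← Set.coe_fintypeCard, ENat.card_eq_coe_fintype_card, Fintype.card_fin] at h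
      exact_mod_cast h
    refine not_hasGraphMinor_of_girth hends hdual (g := 4) (fun X hX h0 => four_le_hammingNorm
      Subtype.val_injective (fun e => SimpleGraph.not_isDiag_of_mem_edgeSet _ e.2)
      (one_mem_cutSpace_completeBipartiteGraph _ _) hX h0) ?_ ?_ <;>
    · rw [hE]; simp

end Planarity

/-! ### The edges of `G_{k,ℓ}` -/

section Cyclic

variable {k : ℕ}

lemma zmod_add_one_ne (hk : 3 ≤ k) (j : ZMod k) : j + 1 ≠ j := fun h => by
  have : Fact (1 < k) := ⟨by omega⟩
  exact one_ne_zero (add_eq_left.mp h)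

lemma zmod_add_one_add_one_ne (hk : 3 ≤ k) (j : ZMod k) : j + 1 + 1 ≠ j := fun h => by
  have h2 : ((2 : ℕ) : ZMod k) = 0 := by
    rw [add_assoc, add_eq_left, one_add_one_eq_two] at h
    exact_mod_cast h
  exact absurd (Nat.le_of_dvd two_pos ((ZMod.natCast_eq_zero_iff 2 k).mp h2)) (by omega)

lemma eq_of_forall_ne_eq_add_one [NeZero k] {α : Type*} {g : ZMod k → α} (c : ZMod k)
    (h : ∀ j ≠ c, g j = g (j + 1)) (j j' : ZMod k) : g j = g j' := by
  have key : ∀ n : ℕ, n < k → g (c + 1 + n) = g (c + 1) := fun n => by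
    induction n with
    | zero => simp
    | succ n ih =>
      intro hn
      rw [← ih (by omega), h (c + 1 + n), Nat.cast_succ, add_assoc (c + 1)]
      intro hc
      have h0 : ((n + 1 : ℕ) : ZMod k) = 0 := by
        rw [add_assoc, add_eq_left] at hc
        rw [Nat.cast_succ, add_comm, hc]
      exact absurd (Nat.le_of_dvd n.succ_pos ((ZMod.natCast_eq_zero_iff _ k).mp h0)) (by omega)
  have hall : ∀ j, g j = g (c + 1) := fun j => by
    rw [← key (j - (c + 1)).val (ZMod.val_lt _), ZMod.natCast_zmod_val, add_sub_cancel]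
  rw [hall j, hall j']

end Cyclic

/-- The edges of `G_{k,m+1}`: `hor i j` joins `(i, j)` and `(i, j + 1)`, `vert r j` joins `(r, j)`
and `(r + 1, j)`, `diag r j` joins `(r, j)` and `(r + 1, j + 1)`. Rows are indexed by `Fin (m + 1)`
and the strips between consecutive rows by `Fin m`. -/
inductive GklEdge (k m : ℕ) : Type
  | hor (i : Fin (m + 1)) (j : ZMod k)
  | vert (r : Fin m) (j : ZMod k)
  | diag (r : Fin m) (j : ZMod k)

namespace GklEdge

variable {k m : ℕ}

/-- The inner end of an edge, or the first end in the cyclic direction for a horizontal edge. -/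
def src : GklEdge k m → Fin (m + 1) × ZMod k
  | hor i j => (i, j)
  | vert r j => (r.castSucc, j)
  | diag r j => (r.castSucc, j)

/-- The outer end of an edge, or the second end in the cyclic direction for a horizontal edge. -/
def tgt : GklEdge k m → Fin (m + 1) × ZMod k
  | hor i j => (i, j + 1)
  | vert r j => (r.succ, j)
  | diag r j => (r.succ, j + 1)

/-- The unordered pair of ends of an edge. -/
def ends (e : GklEdge k m) : Sym2 (Fin (m + 1) × ZMod k) := s(e.src, e.tgt)

/-- Edges as a disjoint union, used to sum over them. -/
def equivSum (k m : ℕ) :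
    (Fin (m + 1) × ZMod k) ⊕ (Fin m × ZMod k) ⊕ (Fin m × ZMod k) ≃ GklEdge k m where
  toFun := Sum.elim (fun p => hor p.1 p.2) (Sum.elim (fun p => vert p.1 p.2) fun p => diag p.1 p.2)
  invFun
    | hor i j => .inl (i, j)
    | vert r j => .inr (.inl (r, j))
    | diag r j => .inr (.inr (r, j))
  left_inv := by rintro (_ | _ | _) <;> rfl
  right_inv := by rintro (_ | _ | _) <;> rfl

instance [NeZero k] : Fintype (GklEdge k m) := Fintype.ofEquiv _ (equivSum k m)

lemma sum_eq [NeZero k] {M : Type*} [AddCommMonoid M] (f : GklEdge k m → M) :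
    ∑ e, f e = (∑ i, ∑ j, f (hor i j)) + ((∑ r, ∑ j, f (vert r j)) + ∑ r, ∑ j, f (diag r j)) := by
  rw [← (equivSum k m).sum_comp, Fintype.sum_sum_type, Fintype.sum_sum_type]
  simp only [Fintype.sum_prod_type]
  rfl

lemma card_eq [NeZero k] : Fintype.card (GklEdge k m) = (m + 1) * k + (m * k + m * k) := by
  simp [← Fintype.card_congr (equivSum k m), ZMod.card]

lemma ends_injective (hk : 3 ≤ k) : Function.Injective (ends : GklEdge k m → _) := by
  have h1 := zmod_add_one_ne hk
  have h2 := zmod_add_one_add_one_ne hk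
  intro e e' h
  rw [ends, ends, Sym2.eq_iff] at h
  cases e <;> cases e' <;>
    simp only [src, tgt, Prod.mk.injEq, Fin.ext_iff, Fin.val_castSucc, Fin.val_succ] at h <;> grind

lemma exists_src_tgt_iff (p q : Fin (m + 1) × ZMod k) :
    (∃ e : GklEdge k m, e.src = p ∧ e.tgt = q) ↔ (p.1 = q.1 ∧ q.2 = p.2 + 1) ∨
      ((q.1 : ℕ) = (p.1 : ℕ) + 1 ∧ (q.2 = p.2 ∨ q.2 = p.2 + 1)) := by
  constructor
  · rintro ⟨_ | _ | _, rfl, rfl⟩ <;> simp [src, tgt]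
  · obtain ⟨i, j⟩ := p
    obtain ⟨i', j'⟩ := q
    rintro (⟨rfl : i = i', rfl : j' = j + 1⟩ | ⟨hi : (i' : ℕ) = i + 1, hj⟩)
    · exact ⟨hor i j, rfl, rfl⟩
    · obtain ⟨r, rfl⟩ : ∃ r : Fin m, r.castSucc = i := ⟨⟨i, by omega⟩, rfl⟩
      obtain rfl : i' = r.succ := Fin.ext hi
      rcases hj with rfl | rfl
      · exact ⟨vert r _, rfl, rfl⟩
      · exact ⟨diag r j, rfl, rfl⟩

lemma src_ne_tgt (hk : 3 ≤ k) (e : GklEdge k m) : e.src ≠ e.tgt := by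
  cases e with
  | hor i j => exact fun h => zmod_add_one_ne hk j (congrArg Prod.snd h).symm
  | vert r j => exact fun h => (Fin.castSucc_lt_succ (i := r)).ne (congrArg Prod.fst h)
  | diag r j => exact fun h => (Fin.castSucc_lt_succ (i := r)).ne (congrArg Prod.fst h)

end GklEdge

open GklEdge

section Gkl

variable {k m : ℕ}

lemma range_ends (hk : 3 ≤ k) :
    Set.range (ends : GklEdge k m → _) = (Gkl k (m + 1)).edgeSet := by
  ext p
  induction p with
  | _ u v =>
    rw [SimpleGraph.mem_edgeSet, Gkl, SimpleGraph.fromRel_adj, ← exists_src_tgt_iff,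
      ← exists_src_tgt_iff, ← exists_or]
    simp only [Set.mem_range, ends, Sym2.eq_iff]
    refine ⟨fun ⟨e, h⟩ => ⟨?_, e, ?_⟩, fun ⟨_, e, h⟩ => ⟨e, ?_⟩⟩
    · rcases h with ⟨rfl, rfl⟩ | ⟨rfl, rfl⟩
      exacts [e.src_ne_tgt hk, (e.src_ne_tgt hk).symm]
    · exact h
    · exact h

lemma ends_mem_edgeSet (hk : 3 ≤ k) (e : GklEdge k m) : e.ends ∈ (Gkl k (m + 1)).edgeSet :=
  range_ends hk ▸ Set.mem_range_self e

lemma ncard_edgeSet_Gkl [NeZero k] (hk : 3 ≤ k) :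
    (Gkl k (m + 1)).edgeSet.ncard = (m + 1) * k + (m * k + m * k) := by
  rw [← range_ends hk, ← Nat.card_coe_set_eq, Nat.card_range_of_injective (ends_injective hk),
    Nat.card_eq_fintype_card, card_eq]

lemma eq_of_forall_src_eq_tgt [NeZero k] {α : Type*} {x : Fin (m + 1) × ZMod k → α}
    (h : ∀ e : GklEdge k m, x e.src = x e.tgt) (u v : Fin (m + 1) × ZMod k) : x u = x v := by
  have hrow : ∀ i j, x (i, j) = x (i, 0) := fun i j =>
    eq_of_forall_ne_eq_add_one 0 (fun j _ => h (hor i j)) j 0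
  have hcol : ∀ i : Fin (m + 1), x (i, 0) = x (0, 0) := fun i => by
    induction i using Fin.induction with
    | zero => rfl
    | succ r ih => exact (h (vert r 0)).symm.trans ih
  rw [hrow u.1 u.2, hcol, ← hcol v.1, ← hrow]

lemma connected_Gkl [NeZero k] (hk : 3 ≤ k) : (Gkl k (m + 1)).Connected := by
  refine SimpleGraph.connected_iff_exists_forall_reachable _ |>.mpr ⟨(0, 0), fun v => ?_⟩
  refine (eq_of_forall_src_eq_tgt (x := (Gkl k (m + 1)).Reachable (0, 0)) (fun e => ?_) (0, 0) v).mp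
    (SimpleGraph.Reachable.refl _)
  have hadj : (Gkl k (m + 1)).Adj e.src e.tgt := ends_mem_edgeSet hk e
  exact propext ⟨fun h => h.trans hadj.reachable, fun h => h.trans hadj.symm.reachable⟩

end Gkl

/-! ### Planarity of `G_{k,ℓ}` -/

section GklPlanarity

/-- The faces of `G_{k,m+1}`: the disc inside `C⁰`, the region outside `C^m`, the triangle `up r j`
on the edge `hor r j` and the triangle `down r j` on the edge `hor (r + 1) j`. -/
inductive GklFace (k m : ℕ) : Type
  | inner
  | outer
  | up (r : Fin m) (j : ZMod k)
  | down (r : Fin m) (j : ZMod k)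

namespace GklFace

variable {k m : ℕ}

/-- Faces as a disjoint union, used to count them. -/
def equivSum (k m : ℕ) : Bool ⊕ (Fin m × ZMod k) ⊕ (Fin m × ZMod k) ≃ GklFace k m where
  toFun := Sum.elim (fun b => bif b then inner else outer)
    (Sum.elim (fun p => up p.1 p.2) fun p => down p.1 p.2)
  invFun
    | inner => .inl true
    | outer => .inl false
    | up r j => .inr (.inl (r, j))
    | down r j => .inr (.inr (r, j))
  left_inv := by rintro ((_ | _) | _ | _) <;> rfl
  right_inv := by rintro (_ | _ | _ | _) <;> rfl

instance [NeZero k] : Fintype (GklFace k m) := Fintype.ofEquiv _ (equivSum k m)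

lemma card_eq [NeZero k] : Fintype.card (GklFace k m) = 2 + (m * k + m * k) := by
  simp [← Fintype.card_congr (equivSum k m), ZMod.card]

/-- The face next to the edge `hor i j` on the inner side of the cycle `C^i`. -/
def below (i : Fin (m + 1)) (j : ZMod k) : GklFace k m :=
  Fin.cases inner (fun r => down r j) i

/-- The face next to the edge `hor i j` on the outer side of the cycle `C^i`. -/
def above (i : Fin (m + 1)) (j : ZMod k) : GklFace k m :=
  Fin.lastCases outer (fun r => up r j) i

@[simp] lemma below_zero (j : ZMod k) : (below 0 j : GklFace k m) = inner := rfl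

@[simp] lemma below_succ (r : Fin m) (j : ZMod k) : below r.succ j = down r j := rfl

@[simp] lemma above_last (j : ZMod k) : (above (Fin.last m) j : GklFace k m) = outer :=
  Fin.lastCases_last

@[simp] lemma above_castSucc (r : Fin m) (j : ZMod k) : above r.castSucc j = up r j :=
  Fin.lastCases_castSucc _

end GklFace

open GklFace

namespace GklEdge

variable {k m : ℕ}

/-- The two faces at an edge. -/
def sides : GklEdge k m → Sym2 (GklFace k m)
  | hor i j => s(below i j, above i j)
  | vert r j => s(up r (j - 1), down r j)
  | diag r j => s(up r j, down r j)

variable [NeZero k]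

lemma eq_of_coboundary_sides_eq_zero {y : GklFace k m → ZMod 2} (hy : coboundary sides y = 0)
    (f g : GklFace k m) : y f = y g := by
  have hhor : ∀ i j, y (below i j) = y (above i j) := fun i j =>
    (coboundary_eq_zero_iff (ends := sides) (e := hor i j) (u := below i j) rfl).mp (congrFun hy _)
  have hvert : ∀ r j, y (up r (j - 1)) = y (down r j) := fun r j =>
    (coboundary_eq_zero_iff (ends := sides) (e := vert r j) rfl).mp (congrFun hy _)
  have hdiag : ∀ r j, y (up r j) = y (down r j) := fun r j =>
    (coboundary_eq_zero_iff (ends := sides) (e := diag r j) rfl).mp (congrFun hy _)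
  have hstrip : ∀ r j, y (up r j) = y (up r 0) := fun r j =>
    eq_of_forall_ne_eq_add_one (g := fun j => y (up r j)) 0 (fun j _ => by
      rw [hdiag r (j + 1), ← hvert, add_sub_cancel_right]) j 0
  have habove : ∀ i, y (above i 0) = y inner := fun i => by
    induction i using Fin.induction with
    | zero => rw [← hhor, below_zero]
    | succ r ih => rw [← hhor, below_succ, ← hdiag, ← above_castSucc, ih]
  have hinner : ∀ f, y f = y inner := fun f => by
    cases f with
    | inner => rfl
    | outer => rw [← above_last 0, habove]
    | up r j => rw [hstrip, ← above_castSucc, habove]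
    | down r j => rw [← hdiag, hstrip, ← above_castSucc, habove]
  rw [hinner f, hinner g]

lemma coboundary_ends_dotProduct_coboundary_sides (x : Fin (m + 1) × ZMod k → ZMod 2)
    (y : GklFace k m → ZMod 2) : coboundary ends x ⬝ᵥ coboundary sides y = 0 := by
  have hrow : ∀ i, ∑ j, (x (i, j) + x (i, j + 1)) = 0 := fun i => by
    have hshift := Equiv.sum_comp (Equiv.addRight (1 : ZMod k)) (fun j => x (i, j))
    simp only [Equiv.coe_addRight] at hshift
    rw [Finset.sum_add_distrib, hshift, CharTwo.add_self_eq_zero]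
  have hhor : ∑ i, ∑ j, (x (i, j) + x (i, j + 1)) * (y (below i j) + y (above i j)) =
      ∑ r : Fin m, ∑ j, ((x (r.succ, j) + x (r.succ, j + 1)) * y (down r j) +
        (x (r.castSucc, j) + x (r.castSucc, j + 1)) * y (up r j)) := by
    simp only [mul_add, Finset.sum_add_distrib]
    rw [Fin.sum_univ_succ, Fin.sum_univ_castSucc (fun i => ∑ j, _ * y (above i j))]
    simp only [below_zero, below_succ, above_last, above_castSucc, ← Finset.sum_mul, hrow, zero_mul,
      zero_add, add_zero]
  have hshift : ∀ r : Fin m, ∑ j, (x (r.castSucc, j) + x (r.succ, j)) * y (up r (j - 1)) =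
      ∑ j, (x (r.castSucc, j + 1) + x (r.succ, j + 1)) * y (up r j) := fun r => by
    rw [← Equiv.sum_comp (Equiv.addRight (1 : ZMod k))]
    simp only [Equiv.coe_addRight, add_sub_cancel_right]
  rw [dotProduct, sum_eq]
  simp only [coboundary_apply, ends, src, tgt, sides, endSum_mk]
  rw [hhor]
  simp only [mul_add (x _ + x _), Finset.sum_add_distrib, hshift]
  simp only [← Finset.sum_add_distrib]
  refine Finset.sum_eq_zero fun r _ => Finset.sum_eq_zero fun j _ => ?_
  ring_nf
  simp [show (2 : ZMod 2) = 0 from rfl]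

lemma isAlgebraicDual_sides : IsAlgebraicDual (ends : GklEdge k m → _) sides := by
  refine IsAlgebraicDual.of_euler ?_ (fun x hx => eq_of_forall_src_eq_tgt fun e =>
    (coboundary_eq_zero_iff rfl).mp (congrFun hx e)) (fun y => eq_of_coboundary_sides_eq_zero) ?_
  · rintro _ ⟨y, rfl⟩
    exact mem_cycleSpace.mpr fun x => coboundary_ends_dotProduct_coboundary_sides x y
  · rw [GklEdge.card_eq, GklFace.card_eq, Fintype.card_prod, Fintype.card_fin, ZMod.card]
    omega

end GklEdge

lemma isPlanar_Gkl {k m : ℕ} [NeZero k] (hk : 3 ≤ k) : IsPlanar (Gkl k (m + 1)) :=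
  isPlanar_of_isAlgebraicDual (range_ends hk) isAlgebraicDual_sides

end GklPlanarity

/-! ### Connectivity of `G_{k,ℓ}` -/

lemma connected_induce_of_forall_eq {V : Type*} {G : SimpleGraph V} {s : Set V} (hs : s.Nonempty)
    (h : ∀ x : V → Prop, (∀ u ∈ s, ∀ v ∈ s, G.Adj u v → x u = x v) → ∀ u ∈ s, ∀ v ∈ s, x u = x v) :
    (G.induce s).Connected := by
  obtain ⟨u, hu⟩ := hs
  refine (SimpleGraph.connected_iff_exists_forall_reachable _).mpr ⟨⟨u, hu⟩, fun ⟨v, hv⟩ => ?_⟩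
  let x : V → Prop := fun v => ∃ hv : v ∈ s, (G.induce s).Reachable ⟨u, hu⟩ ⟨v, hv⟩
  have hx : ∀ v ∈ s, ∀ w ∈ s, G.Adj v w → x v → x w := fun v _ w hw hvw ⟨_, h⟩ =>
    ⟨hw, h.trans (SimpleGraph.Adj.reachable (G := G.induce s) hvw)⟩
  have hux : x u := ⟨hu, SimpleGraph.Reachable.refl _⟩
  rw [h x (fun v hv w hw hvw => propext ⟨hx v hv w hw hvw, hx w hw v hv hvw.symm⟩) u hu v hv] at hux
  exact hux.2

section Connectivity

variable {k m : ℕ} [NeZero k] {s : Set (Fin (m + 1) × ZMod k)}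

/-- The columns in which `s` meets row `i`. -/
noncomputable def columnsAt (s : Set (Fin (m + 1) × ZMod k)) (i : Fin (m + 1)) :
    Finset (ZMod k) := Finset.univ.filter fun j => (i, j) ∈ s

lemma mem_columnsAt {i : Fin (m + 1)} {j : ZMod k} : j ∈ columnsAt s i ↔ (i, j) ∈ s := by
  simp [columnsAt]

lemma ncard_eq_sum_card_columnsAt (s : Set (Fin (m + 1) × ZMod k)) :
    s.ncard = ∑ i, (columnsAt s i).card := by
  rw [Set.ncard_eq_toFinset_card', ← Set.filter_mem_univ_eq_toFinset]
  simp only [columnsAt, Finset.card_filter, Fintype.sum_prod_type]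

lemma card_columnsAt_add_card_columnsAt_le {i i' : Fin (m + 1)} (h : i ≠ i') :
    (columnsAt s i).card + (columnsAt s i').card ≤ s.ncard := by
  rw [ncard_eq_sum_card_columnsAt, ← Finset.sum_pair (f := fun i => (columnsAt s i).card) h]
  exact Finset.sum_le_sum_of_subset (Finset.subset_univ _)

lemma exists_notMem_of_card_columnsAt_lt {i : Fin (m + 1)} (h : (columnsAt s i).card < k) :
    ∃ j, (i, j) ∉ s := by
  obtain ⟨j, hj⟩ := Finset.exists_mem_notMem_of_card_lt_card (h.trans_eq (ZMod.card k).symm)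
  exact ⟨j, mem_columnsAt.not.mp hj.2⟩

lemma eq_of_card_columnsAt_le_one (hk : 3 ≤ k) {α : Type*} {x : Fin (m + 1) × ZMod k → α}
    (hx : ∀ e : GklEdge k m, e.src ∉ s → e.tgt ∉ s → x e.src = x e.tgt) {i : Fin (m + 1)}
    (hi : (columnsAt s i).card ≤ 1) {j j' : ZMod k} (hj : (i, j) ∉ s) (hj' : (i, j') ∉ s) :
    x (i, j) = x (i, j') := by
  obtain ⟨c, hc⟩ : ∃ c, columnsAt s i ⊆ {c} := Finset.card_le_one_iff_subset_singleton.mp hi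
  have hmem : ∀ j, j ≠ c → (i, j) ∉ s := fun j hne hjs =>
    hne (Finset.mem_singleton.mp (hc (mem_columnsAt.mpr hjs)))
  -- Fill the possible gap at column `c` with the value at the next column.
  let g : ZMod k → α := fun j => if j = c then x (i, c + 1) else x (i, j)
  have hg : ∀ j, (i, j) ∉ s → g j = x (i, j) := fun j hj => by
    by_cases h : j = c
    · subst h
      exact (if_pos rfl).trans (hx (hor i j) hj (hmem _ (zmod_add_one_ne hk j))).symm
    · exact if_neg h
  rw [← hg j hj, ← hg j' hj']
  refine eq_of_forall_ne_eq_add_one (c - 1) (fun j hne => ?_) j j'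
  have hne' : j + 1 ≠ c := fun h => hne (eq_sub_of_add_eq h)
  rw [hg (j + 1) (hmem _ hne')]
  by_cases h : j = c
  · exact (if_pos h).trans (by rw [h])
  · exact (if_neg h).trans (hx (hor i j) (hmem j h) (hmem _ hne'))

lemma eq_of_mem_consecutive_rows (hk : 3 ≤ k) (hs : s.ncard ≤ 3) {α : Type*}
    {x : Fin (m + 1) × ZMod k → α}
    (hx : ∀ e : GklEdge k m, e.src ∉ s → e.tgt ∉ s → x e.src = x e.tgt) {r : Fin m} {j j' : ZMod k}
    (hj : (r.castSucc, j) ∉ s) (hj' : (r.succ, j') ∉ s) : x (r.castSucc, j) = x (r.succ, j') := by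
  have hsum := card_columnsAt_add_card_columnsAt_le (s := s) (Fin.castSucc_lt_succ (i := r)).ne
  -- A vertex has two neighbours in an adjacent row, so one of them survives if that row loses at
  -- most one vertex.
  by_cases hlow : (columnsAt s r.castSucc).card ≤ 1
  · by_cases h0 : (r.castSucc, j') ∈ s
    · have h1 : (r.castSucc, j' - 1) ∉ s := fun h1 => zmod_add_one_ne hk (j' - 1) <| by
        rw [sub_add_cancel]
        exact Finset.card_le_one.mp hlow _ (mem_columnsAt.mpr h0) _ (mem_columnsAt.mpr h1)
      have hdiag := hx (diag r (j' - 1)) h1 (by rwa [tgt, sub_add_cancel])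
      rw [src, tgt, sub_add_cancel] at hdiag
      exact (eq_of_card_columnsAt_le_one hk hx hlow hj h1).trans hdiag
    · exact (eq_of_card_columnsAt_le_one hk hx hlow hj h0).trans (hx (vert r j') h0 hj')
  · have hhigh : (columnsAt s r.succ).card ≤ 1 := by omega
    by_cases h0 : (r.succ, j) ∈ s
    · have h1 : (r.succ, j + 1) ∉ s := fun h1 => zmod_add_one_ne hk j <|
        Finset.card_le_one.mp hhigh _ (mem_columnsAt.mpr h1) _ (mem_columnsAt.mpr h0)
      exact (hx (diag r j) hj h1).trans (eq_of_card_columnsAt_le_one hk hx hhigh h1 hj')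
    · exact (hx (vert r j) hj h0).trans (eq_of_card_columnsAt_le_one hk hx hhigh h0 hj')

lemma eq_of_mem_row (hk : 3 ≤ k) (hm : 1 ≤ m) (hs : s.ncard ≤ 3) {α : Type*}
    {x : Fin (m + 1) × ZMod k → α}
    (hx : ∀ e : GklEdge k m, e.src ∉ s → e.tgt ∉ s → x e.src = x e.tgt) {i : Fin (m + 1)}
    {j j' : ZMod k} (hj : (i, j) ∉ s) (hj' : (i, j') ∉ s) : x (i, j) = x (i, j') := by
  by_cases hi : (columnsAt s i).card ≤ 1
  · exact eq_of_card_columnsAt_le_one hk hx hi hj hj'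
  obtain ⟨r, rfl | rfl⟩ : ∃ r : Fin m, i = r.castSucc ∨ i = r.succ := by
    rcases Nat.lt_or_ge i m with h | h
    · exact ⟨⟨i, h⟩, Or.inl rfl⟩
    · exact ⟨⟨m - 1, by omega⟩, Or.inr (Fin.ext (by simp only [Fin.val_succ]; omega))⟩
  all_goals
    have hsum := card_columnsAt_add_card_columnsAt_le (s := s) (Fin.castSucc_lt_succ (i := r)).ne
  · obtain ⟨c, hc⟩ := exists_notMem_of_card_columnsAt_lt (s := s) (i := r.succ) (by omega)
    exact (eq_of_mem_consecutive_rows hk hs hx hj hc).trans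
      (eq_of_mem_consecutive_rows hk hs hx hj' hc).symm
  · obtain ⟨c, hc⟩ := exists_notMem_of_card_columnsAt_lt (s := s) (i := r.castSucc) (by omega)
    exact (eq_of_mem_consecutive_rows hk hs hx hc hj).symm.trans
      (eq_of_mem_consecutive_rows hk hs hx hc hj')

lemma eq_of_ncard_le_three (hk : 3 ≤ k) (hm : 1 ≤ m) (hs : s.ncard ≤ 3)
    (hs' : s.ncard < k ∨ m = 1) {α : Type*} {x : Fin (m + 1) × ZMod k → α}
    (hx : ∀ e : GklEdge k m, e.src ∉ s → e.tgt ∉ s → x e.src = x e.tgt)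
    {u v : Fin (m + 1) × ZMod k} (hu : u ∉ s) (hv : v ∉ s) : x u = x v := by
  obtain ⟨i, j⟩ := u
  obtain ⟨i', j'⟩ := v
  rcases hs' with hs' | rfl
  · have hsurvivor : ∀ i, ∃ j, (i, j) ∉ s := fun i => by
      refine exists_notMem_of_card_columnsAt_lt (lt_of_le_of_lt ?_ hs')
      rw [ncard_eq_sum_card_columnsAt]
      exact Finset.single_le_sum (f := fun i => (columnsAt s i).card) (fun _ _ => Nat.zero_le _)
        (Finset.mem_univ i)
    choose c hc using hsurvivor
    have hcol : ∀ i, x (i, c i) = x (0, c 0) := fun i => by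
      induction i using Fin.induction with
      | zero => rfl
      | succ r ih => exact (eq_of_mem_consecutive_rows hk hs hx (hc _) (hc _)).symm.trans ih
    rw [eq_of_mem_row hk hm hs hx hu (hc i), hcol, ← hcol i',
      eq_of_mem_row hk hm hs hx hv (hc i')]
  · fin_cases i <;> fin_cases i'
    · exact eq_of_mem_row hk hm hs hx hu hv
    · exact eq_of_mem_consecutive_rows hk hs hx (r := 0) hu hv
    · exact (eq_of_mem_consecutive_rows hk hs hx (r := 0) hv hu).symm
    · exact eq_of_mem_row hk hm hs hx hu hv

lemma isKConnected_Gkl (hk : 3 ≤ k) (hm : 1 ≤ m) {c : ℕ} (hc : c ≤ 4) (hc' : c ≤ k ∨ m = 1) :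
    IsKConnected c (Gkl k (m + 1)) := by
  have hcard : c < Fintype.card (Fin (m + 1) × ZMod k) := by
    rw [Fintype.card_prod, Fintype.card_fin, ZMod.card]
    nlinarith
  refine ⟨hcard, fun s hs => connected_induce_of_forall_eq ?_ fun x hx u hu v hv => ?_⟩
  · rw [Set.nonempty_compl]
    rintro rfl
    rw [Set.ncard_univ, Nat.card_eq_fintype_card] at hs
    exact hs.not_gt hcard
  · exact eq_of_ncard_le_three hk hm (by omega) (hc'.imp_left hs.trans_le)
      (fun e he he' => hx _ he _ he' (ends_mem_edgeSet hk e)) hu hv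

end Connectivity

/-! ### Even edge sets of small weight -/

/-- The edge weights under which the cycles `C^i` and the triangles of `G_{k,m+1}` all have the same
weight `2k`. -/
def GklEdge.wt {k m : ℕ} : GklEdge k m → ℕ
  | hor _ _ => 2
  | vert _ _ => k - 1
  | diag _ _ => k - 1

lemma GklEdge.wt_pos {k m : ℕ} (hk : 3 ≤ k) (e : GklEdge k m) : 0 < e.wt := by
  cases e <;> simp only [wt] <;> omega

/-- The cycles of `G_{k,m+1}` of weight `2k`: the cycle `C^i`, the triangle `up r j` on
`(r, j), (r, j + 1), (r + 1, j + 1)` and the triangle `down r j` on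
`(r, j), (r + 1, j), (r + 1, j + 1)`. -/
inductive TightIx (k m : ℕ) : Type
  | row (i : Fin (m + 1))
  | up (r : Fin m) (j : ZMod k)
  | down (r : Fin m) (j : ZMod k)

section EvenSets

variable {k m : ℕ} [NeZero k]

/-- The edge set of a cycle of weight `2k`. -/
noncomputable def tightEdges : TightIx k m → Finset (GklEdge k m)
  | .row i => Finset.univ.image (hor i)
  | .up r j => {hor r.castSucc j, vert r (j + 1), diag r j}
  | .down r j => {hor r.succ j, vert r j, diag r j}

lemma sum_wt_tightEdges (hk : 3 ≤ k) (t : TightIx k m) : ∑ e ∈ tightEdges t, e.wt = 2 * k := by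
  cases t with
  | row i =>
    rw [tightEdges, Finset.sum_image (fun a _ b _ h => by simpa using h)]
    simp [wt, ZMod.card, mul_comm]
  | up r j | down r j =>
    rw [tightEdges, Finset.sum_insert (by simp), Finset.sum_insert (by simp), Finset.sum_singleton]
    simp only [wt]
    omega

lemma sum_wt_support (X : GklEdge k m → ZMod 2) :
    ∑ e with X e ≠ 0, e.wt = 2 * ∑ i, hammingNorm (fun j => X (hor i j)) +
      (k - 1) * ∑ r, (hammingNorm (fun j => X (vert r j)) + hammingNorm fun j => X (diag r j)) := by
  simp only [Finset.sum_filter, sum_eq, wt, hammingNorm, Finset.card_filter, Finset.mul_sum,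
    mul_add, mul_ite, mul_one, mul_zero, Finset.sum_add_distrib]

variable {X : GklEdge k m → ZMod 2}

lemma sum_vert_add_sum_diag_eq_zero (hX : X ∈ cycleSpace ends) (r : Fin m) :
    ∑ j, X (vert r j) + ∑ j, X (diag r j) = 0 := by
  have hcut := mem_cycleSpace.mp hX fun v => if v.1 ≤ r.castSucc then 1 else 0
  have hcross : ∀ s : Fin m, ((if s.castSucc ≤ r.castSucc then 1 else 0) +
      if s.succ ≤ r.castSucc then 1 else 0 : ZMod 2) = if s = r then 1 else 0 := fun s => by
    rcases lt_trichotomy s r with h | rfl | h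
    · rw [if_pos (Fin.castSucc_le_castSucc_iff.mpr h.le), if_pos (Fin.succ_le_castSucc_iff.mpr h),
        if_neg h.ne]
      rfl
    · simp
    · rw [if_neg (Fin.castSucc_le_castSucc_iff.not.mpr h.not_ge),
        if_neg (Fin.succ_le_castSucc_iff.not.mpr h.asymm), if_neg h.ne', add_zero]
  simpa only [dotProduct, sum_eq, coboundary_apply, ends, src, tgt, endSum_mk,
    CharTwo.add_self_eq_zero, hcross, ite_mul, one_mul, zero_mul, Finset.sum_const_zero, zero_add,
    Finset.sum_ite_irrel, Finset.sum_add_distrib, Finset.sum_ite_eq', Finset.mem_univ, if_true]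
    using hcut

lemma hor_sub_one_add_hor (hX : X ∈ cycleSpace ends) (i : Fin (m + 1)) (j : ZMod k) :
    X (hor i (j - 1)) + X (hor i j) =
      ∑ r : Fin m, ((if r.castSucc = i then X (vert r j) + X (diag r j) else 0) +
        if r.succ = i then X (vert r j) + X (diag r (j - 1)) else 0) := by
  have hcut := mem_cycleSpace.mp hX fun v => if v.1 = i then if v.2 = j then 1 else 0 else 0
  have hsub : ∀ j', j' + 1 = j ↔ j' = j - 1 := fun _ => eq_sub_iff_add_eq.symm
  simp only [dotProduct, sum_eq, coboundary_apply, ends, src, tgt, endSum_mk, add_mul, ite_mul,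
    one_mul, zero_mul, Finset.sum_add_distrib, Finset.sum_ite_irrel, Finset.sum_ite_eq',
    Finset.mem_univ, if_true, Finset.sum_const_zero, hsub] at hcut
  rw [← CharTwo.add_eq_zero]
  refine Eq.trans ?_ hcut
  simp only [Finset.sum_add_distrib, ite_add_zero]
  abel

lemma hor_castSucc_sub_one_add_hor (hX : X ∈ cycleSpace ends) {r : Fin m}
    (hr : ∀ s ≠ r, ∀ j, X (vert s j) = 0 ∧ X (diag s j) = 0) (j : ZMod k) :
    X (hor r.castSucc (j - 1)) + X (hor r.castSucc j) = X (vert r j) + X (diag r j) := by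
  rw [hor_sub_one_add_hor hX, Fintype.sum_eq_single r fun s hs => ?_, if_pos rfl,
    if_neg (Fin.castSucc_lt_succ (i := r)).ne', add_zero]
  simp [hr s hs]

lemma hor_succ_sub_one_add_hor (hX : X ∈ cycleSpace ends) {r : Fin m}
    (hr : ∀ s ≠ r, ∀ j, X (vert s j) = 0 ∧ X (diag s j) = 0) (j : ZMod k) :
    X (hor r.succ (j - 1)) + X (hor r.succ j) = X (vert r j) + X (diag r (j - 1)) := by
  rw [hor_sub_one_add_hor hX, Fintype.sum_eq_single r fun s hs => ?_, if_pos rfl,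
    if_neg (Fin.castSucc_lt_succ (i := r)).ne, zero_add]
  simp [hr s hs]

lemma exists_row_of_forall_cross_eq_zero (hX : X ∈ cycleSpace ends) (h0 : X ≠ 0)
    (h : ∀ r j, X (vert r j) = 0 ∧ X (diag r j) = 0) :
    ∃ i, ∀ e ∈ tightEdges (.row i), X e ≠ 0 := by
  have hconst : ∀ i j j', X (hor i j) = X (hor i j') := fun i j j' => by
    refine eq_of_forall_ne_eq_add_one (g := fun j => X (hor i j)) 0 (fun j _ => ?_) j j'
    rw [← CharTwo.add_eq_zero]
    have := hor_sub_one_add_hor hX i (j + 1)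
    simpa [h] using this
  obtain ⟨e, he⟩ := Function.ne_iff.mp h0
  cases e with
  | hor i j =>
    refine ⟨i, fun e' he' => ?_⟩
    obtain ⟨j', -, rfl⟩ := Finset.mem_image.mp he'
    rwa [hconst i j' j]
  | vert r j => exact absurd (h r j).1 he
  | diag r j => exact absurd (h r j).2 he

lemma exists_eq_single_of_hammingNorm_add_eq_two {ι : Type*} [Fintype ι] [DecidableEq ι]
    {V D : ι → ZMod 2} (σ : Equiv.Perm ι) (h : ∀ j, V (σ j) = D j)
    (hVD : hammingNorm V + hammingNorm D = 2) :
    ∃ j, D = Pi.single j 1 ∧ V = Pi.single (σ j) 1 := by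
  have hnorm : hammingNorm D = hammingNorm V := Finset.card_equiv σ fun j => by simp [h]
  obtain ⟨j, hj⟩ := Finset.card_eq_one.mp (show hammingNorm D = 1 by omega)
  have hD : D = Pi.single j 1 := funext fun i => by
    have hi : D i ≠ 0 ↔ i = j := by simpa using congrArg (i ∈ ·) hj
    by_cases hij : i = j
    · subst hij
      rw [zmod_two_eq_one_of_ne_zero (hi.mpr rfl), Pi.single_eq_same]
    · rw [not_not.mp (hi.not.mpr hij), Pi.single_eq_of_ne hij]
  refine ⟨j, hD, funext fun i => ?_⟩
  conv_lhs => rw [← σ.apply_symm_apply i]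
  simp only [h, hD, Pi.single_apply, Equiv.symm_apply_eq]

lemma ne_zero_of_hammingNorm_le_one (hk : 3 ≤ k) {A : ZMod k → ZMod 2} (hA : hammingNorm A ≤ 1)
    {j : ZMod k} (h : A (j - 1) + A j = 1) (h' : A j + A (j + 1) = 1) : A j ≠ 0 := fun h0 => by
  rw [h0, add_zero] at h
  rw [h0, zero_add] at h'
  have hne := zmod_add_one_add_one_ne hk (j - 1)
  rw [sub_add_cancel] at hne
  exact hne (Finset.card_le_one.mp hA _ (by simp [h']) _ (by simp [h]))

lemma exists_up_of_hor_succ_eq_zero (hk : 3 ≤ k) (hX : X ∈ cycleSpace ends) {r : Fin m}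
    (hr : ∀ s ≠ r, ∀ j, X (vert s j) = 0 ∧ X (diag s j) = 0)
    (hcross : hammingNorm (fun j => X (vert r j)) + hammingNorm (fun j => X (diag r j)) = 2)
    (hhor : hammingNorm (fun j => X (hor r.castSucc j)) ≤ 1) (h0 : ∀ j, X (hor r.succ j) = 0) :
    ∃ j, ∀ e ∈ tightEdges (.up r j), X e ≠ 0 := by
  obtain ⟨j, hD, hV⟩ := exists_eq_single_of_hammingNorm_add_eq_two (Equiv.addRight 1)
    (fun j => by
      have := hor_succ_sub_one_add_hor hX hr (j + 1)
      rwa [h0, h0, zero_add, eq_comm, CharTwo.add_eq_zero, add_sub_cancel_right] at this) hcross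
  have hvert : ∀ i, X (vert r i) = if i = j + 1 then 1 else 0 := fun i => by
    simpa only [Pi.single_apply, Equiv.coe_addRight] using congrFun hV i
  have hdiag : ∀ i, X (diag r i) = if i = j then 1 else 0 := fun i => by
    simpa only [Pi.single_apply] using congrFun hD i
  have hparity := hor_castSucc_sub_one_add_hor hX hr
  have hne := zmod_add_one_ne hk j
  have hj : X (hor r.castSucc j) ≠ 0 := by
    refine ne_zero_of_hammingNorm_le_one (A := fun j => X (hor r.castSucc j)) hk hhor ?_ ?_
    · rw [hparity, hvert, hdiag, if_neg hne.symm, if_pos rfl, zero_add]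
    · have := hparity (j + 1)
      rwa [hvert, hdiag, if_neg hne, if_pos rfl, add_zero, add_sub_cancel_right] at this
  exact ⟨j, by simp [tightEdges, hj, hvert, hdiag]⟩

lemma exists_down_of_hor_castSucc_eq_zero (hk : 3 ≤ k) (hX : X ∈ cycleSpace ends) {r : Fin m}
    (hr : ∀ s ≠ r, ∀ j, X (vert s j) = 0 ∧ X (diag s j) = 0)
    (hcross : hammingNorm (fun j => X (vert r j)) + hammingNorm (fun j => X (diag r j)) = 2)
    (hhor : hammingNorm (fun j => X (hor r.succ j)) ≤ 1) (h0 : ∀ j, X (hor r.castSucc j) = 0) :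
    ∃ j, ∀ e ∈ tightEdges (.down r j), X e ≠ 0 := by
  obtain ⟨j, hD, hV⟩ := exists_eq_single_of_hammingNorm_add_eq_two (Equiv.refl _)
    (fun j => by
      have := hor_castSucc_sub_one_add_hor hX hr j
      rwa [h0, h0, zero_add, eq_comm, CharTwo.add_eq_zero] at this) hcross
  have hvert : ∀ i, X (vert r i) = if i = j then 1 else 0 := fun i => by
    simpa only [Pi.single_apply, Equiv.refl_apply] using congrFun hV i
  have hdiag : ∀ i, X (diag r i) = if i = j then 1 else 0 := fun i => by
    simpa only [Pi.single_apply] using congrFun hD i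
  have hparity := hor_succ_sub_one_add_hor hX hr
  have hne := zmod_add_one_ne hk j
  have hne' : j - 1 ≠ j := fun h => zmod_add_one_ne hk (j - 1) (by rw [sub_add_cancel, h])
  have hj : X (hor r.succ j) ≠ 0 := by
    refine ne_zero_of_hammingNorm_le_one (A := fun j => X (hor r.succ j)) hk hhor ?_ ?_
    · rw [hparity, hvert, hdiag, if_pos rfl, if_neg hne', add_zero]
    · have := hparity (j + 1)
      rwa [hvert, hdiag, if_neg hne, add_sub_cancel_right, if_pos rfl, zero_add] at this
  exact ⟨j, by simp [tightEdges, hj, hvert, hdiag]⟩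

/-- The number of edges of `X` between the rows `r` and `r + 1`. -/
noncomputable def crossNorm (X : GklEdge k m → ZMod 2) (r : Fin m) : ℕ :=
  hammingNorm (fun j => X (vert r j)) + hammingNorm fun j => X (diag r j)

lemma crossNorm_eq_zero {r : Fin m} (h : crossNorm X r = 0) (j : ZMod k) :
    X (vert r j) = 0 ∧ X (diag r j) = 0 := by
  obtain ⟨hv, hd⟩ := Nat.add_eq_zero_iff.mp h
  exact ⟨congrFun (hammingNorm_eq_zero.mp hv) j, congrFun (hammingNorm_eq_zero.mp hd) j⟩

lemma even_crossNorm (hX : X ∈ cycleSpace ends) (r : Fin m) : Even (crossNorm X r) := by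
  rw [← ZMod.natCast_eq_zero_iff_even, crossNorm, Nat.cast_add, natCast_hammingNorm,
    natCast_hammingNorm, sum_vert_add_sum_diag_eq_zero hX]

lemma exists_crossNorm_eq_two (hk : 3 ≤ k) (hX : X ∈ cycleSpace ends)
    (hw : ∑ e with X e ≠ 0, e.wt ≤ 2 * k) (h0 : ∃ r, crossNorm X r ≠ 0) :
    ∃ r, crossNorm X r = 2 ∧ (∀ s ≠ r, crossNorm X s = 0) ∧
      ∑ i, hammingNorm (fun j => X (hor i j)) ≤ 1 := by
  obtain ⟨r, hr⟩ := h0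
  rw [sum_wt_support] at hw
  change 2 * _ + (k - 1) * ∑ r, crossNorm X r ≤ _ at hw
  obtain ⟨n, rfl⟩ : ∃ n, k = n + 3 := ⟨k - 3, by omega⟩
  have hsum : ∑ s, crossNorm X s ≤ 3 := by
    by_contra! h
    have := Nat.mul_le_mul_left (n + 3 - 1) h
    omega
  have hr2 := even_crossNorm hX r
  have hsplit := Fintype.sum_eq_add_sum_compl r (crossNorm X)
  have hcompl : ∀ s ≠ r, crossNorm X s = 0 := fun s hs => by
    have hle := Finset.single_le_sum (f := crossNorm X) (s := {r}ᶜ) (fun _ _ => Nat.zero_le _)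
      (Finset.mem_compl.mpr (Finset.notMem_singleton.mpr hs))
    have hs2 := even_crossNorm hX s
    grind
  have hr_eq : crossNorm X r = 2 := by grind
  refine ⟨r, hr_eq, hcompl, ?_⟩
  rw [Fintype.sum_eq_single r hcompl, hr_eq] at hw
  omega

theorem exists_tightEdges_of_sum_wt_le (hk : 3 ≤ k) (hX : X ∈ cycleSpace ends) (h0 : X ≠ 0)
    (hw : ∑ e with X e ≠ 0, e.wt ≤ 2 * k) : ∃ t, ∀ e ∈ tightEdges t, X e ≠ 0 := by
  by_cases hzero : ∀ r, crossNorm X r = 0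
  · obtain ⟨i, hi⟩ := exists_row_of_forall_cross_eq_zero hX h0 fun r => crossNorm_eq_zero (hzero r)
    exact ⟨_, hi⟩
  obtain ⟨r, hr, hs, hhor⟩ := exists_crossNorm_eq_two hk hX hw (not_forall.mp hzero)
  have hcross : ∀ s ≠ r, ∀ j, X (vert s j) = 0 ∧ X (diag s j) = 0 := fun s h =>
    crossNorm_eq_zero (hs s h)
  have hpair : hammingNorm (fun j => X (hor r.castSucc j)) +
      hammingNorm (fun j => X (hor r.succ j)) ≤ 1 := by
    refine le_trans ?_ hhor
    rw [← Finset.sum_pair (f := fun i => hammingNorm fun j => X (hor i j))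
      (Fin.castSucc_lt_succ (i := r)).ne]
    exact Finset.sum_le_sum_of_subset (Finset.subset_univ _)
  rcases Nat.eq_zero_or_pos (hammingNorm fun j => X (hor r.succ j)) with hsucc | hsucc
  · obtain ⟨j, hj⟩ := exists_up_of_hor_succ_eq_zero hk hX hcross hr (by omega)
      (congrFun (hammingNorm_eq_zero.mp hsucc))
    exact ⟨_, hj⟩
  · have hcastSucc : (hammingNorm fun j => X (hor r.castSucc j)) = 0 := by omega
    obtain ⟨j, hj⟩ := exists_down_of_hor_castSucc_eq_zero hk hX hcross hr (by omega)
      (congrFun (hammingNorm_eq_zero.mp hcastSucc))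
    exact ⟨_, hj⟩

theorem two_mul_le_sum_wt (hk : 3 ≤ k) (hX : X ∈ cycleSpace ends) (h0 : X ≠ 0) :
    2 * k ≤ ∑ e with X e ≠ 0, e.wt := by
  by_contra! hw
  obtain ⟨t, ht⟩ := exists_tightEdges_of_sum_wt_le hk hX h0 hw.le
  refine hw.not_ge ((sum_wt_tightEdges hk t).symm.trans_le (Finset.sum_le_sum_of_subset ?_))
  exact fun e he => Finset.mem_filter.mpr ⟨Finset.mem_univ e, ht e he⟩

theorem exists_support_eq_tightEdges (hk : 3 ≤ k) (hX : X ∈ cycleSpace ends) (h0 : X ≠ 0)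
    (hw : ∑ e with X e ≠ 0, e.wt = 2 * k) : ∃ t, ∀ e, X e ≠ 0 ↔ e ∈ tightEdges t := by
  obtain ⟨t, ht⟩ := exists_tightEdges_of_sum_wt_le hk hX h0 hw.le
  refine ⟨t, fun e => ⟨fun he => ?_, ht e⟩⟩
  by_contra het
  refine (Finset.sum_lt_sum_of_subset (f := wt) (fun e he => ?_) (?_ : e ∈ _) het (wt_pos hk e)
    fun _ _ _ => Nat.zero_le _).ne ((sum_wt_tightEdges hk t).trans hw.symm)
  · exact Finset.mem_filter.mpr ⟨Finset.mem_univ e, ht e he⟩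
  · exact Finset.mem_filter.mpr ⟨Finset.mem_univ e, he⟩

end EvenSets

/-! ### Cycle subgraphs and their edge sets -/

section CycleSubgraph

variable {V E : Type*} {G : SimpleGraph V} {C : G.Subgraph}

lemma IsCycleSubgraph.exists_adj (hC : IsCycleSubgraph C) {v : V} (hv : v ∈ C.verts) :
    ∃ w, C.Adj v w :=
  Set.nonempty_of_ncard_ne_zero ((hC.2 v hv).trans_ne two_ne_zero)

lemma IsCycleSubgraph.edgeSet_nonempty (hC : IsCycleSubgraph C) : C.edgeSet.Nonempty := by
  obtain ⟨v, hv⟩ := hC.1.nonempty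
  obtain ⟨w, hvw⟩ := hC.exists_adj hv
  exact ⟨s(v, w), hvw⟩

/-- The subgraph of `G` formed by the edges of `G` in `S` and their ends. -/
def edgeSubgraph (G : SimpleGraph V) (S : Set (Sym2 V)) : G.Subgraph where
  verts := {v | ∃ w, G.Adj v w ∧ s(v, w) ∈ S}
  Adj v w := G.Adj v w ∧ s(v, w) ∈ S
  adj_sub h := h.1
  edge_vert h := ⟨_, h⟩
  symm := ⟨fun _ _ h => ⟨h.1.symm, Sym2.eq_swap ▸ h.2⟩⟩

lemma edgeSet_edgeSubgraph {S : Set (Sym2 V)} (hS : S ⊆ G.edgeSet) :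
    (edgeSubgraph G S).edgeSet = S := by
  ext p
  induction p with
  | _ u v => exact and_iff_right_of_imp fun h => hS h

lemma edgeSubgraph_edgeSet (hC : IsCycleSubgraph C) : edgeSubgraph G C.edgeSet = C := by
  have hadj : ∀ u v, (edgeSubgraph G C.edgeSet).Adj u v ↔ C.Adj u v := fun u v =>
    and_iff_right_of_imp C.adj_sub
  refine Subgraph.ext (Set.ext fun v => ⟨fun ⟨w, h⟩ => ?_, fun hv => ?_⟩)
    (funext₂ fun u v => propext (hadj u v))
  · exact C.edge_vert ((hadj v w).mp h)
  · obtain ⟨w, h⟩ := hC.exists_adj hv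
    exact ⟨w, (hadj v w).mpr h⟩

lemma isCycleSubgraph_edgeSubgraph_range {n : ℕ} [NeZero n] (hn : 3 ≤ n) {f : ZMod n → V}
    (hf : Function.Injective f) (hadj : ∀ j, G.Adj (f j) (f (j + 1))) :
    IsCycleSubgraph (edgeSubgraph G (Set.range fun j => s(f j, f (j + 1)))) := by
  set C := edgeSubgraph G (Set.range fun j => s(f j, f (j + 1)))
  have hsucc : ∀ j, C.Adj (f j) (f (j + 1)) := fun j => ⟨hadj j, j, rfl⟩
  have hverts : ∀ v ∈ C.verts, ∃ j, f j = v := by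
    rintro v ⟨w, -, j, hj⟩
    rcases Sym2.eq_iff.mp hj with ⟨h, -⟩ | ⟨-, h⟩
    exacts [⟨j, h⟩, ⟨j + 1, h⟩]
  let c : ZMod n → C.verts := fun j => ⟨f j, C.edge_vert (hsucc j)⟩
  constructor
  · refine connected_iff_exists_forall_reachable _ |>.mpr ⟨c 0, fun ⟨v, hv⟩ => ?_⟩
    obtain ⟨j, rfl⟩ := hverts v hv
    refine (eq_of_forall_ne_eq_add_one (g := fun j => C.coe.Reachable (c 0) (c j)) 0
      (fun j _ => ?_) 0 j).mp (Reachable.refl _)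
    have h : C.coe.Adj (c j) (c (j + 1)) := hsucc j
    exact propext ⟨fun h0 => h0.trans h.reachable, fun h0 => h0.trans h.symm.reachable⟩
  · rintro v hv
    obtain ⟨j, rfl⟩ := hverts v hv
    have hnbhd : C.neighborSet (f j) = {f (j + 1), f (j - 1)} := by
      ext w
      constructor
      · rintro ⟨-, i, hi⟩
        rcases Sym2.eq_iff.mp hi with ⟨h, rfl⟩ | ⟨rfl, h⟩
        · exact Or.inl (hf h ▸ rfl)
        · exact Or.inr (by rw [← hf h, add_sub_cancel_right]; rfl)
      · rintro (rfl | rfl)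
        · exact hsucc j
        · exact (sub_add_cancel j 1 ▸ hsucc (j - 1)).symm
    rw [hnbhd, Set.ncard_pair]
    have := zmod_add_one_add_one_ne hn (j - 1)
    rw [sub_add_cancel] at this
    exact hf.ne this

lemma isCycleSubgraph_edgeSubgraph_triangle {a b c : V} (hab : G.Adj a b) (hbc : G.Adj b c)
    (hca : G.Adj c a) : IsCycleSubgraph (edgeSubgraph G {s(a, b), s(b, c), s(c, a)}) := by
  let f : ZMod 3 → V := ![a, b, c]
  have hf : Function.Injective f := by
    refine List.nodup_ofFn.mp ?_
    simp [f, hab.ne, hbc.ne, hca.ne']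
  have hrange : (Set.range fun j => s(f j, f (j + 1))) = {s(a, b), s(b, c), s(c, a)} := by
    refine Set.ext fun p => ⟨?_, ?_⟩
    · rintro ⟨j, rfl⟩
      match j with
      | 0 => exact Or.inl rfl
      | 1 => exact Or.inr (Or.inl rfl)
      | 2 => exact Or.inr (Or.inr rfl)
    · rintro (rfl | rfl | rfl)
      exacts [⟨0, rfl⟩, ⟨1, rfl⟩, ⟨2, rfl⟩]
  rw [← hrange]
  refine isCycleSubgraph_edgeSubgraph_range le_rfl hf fun j => ?_
  match j with
  | 0 => exact hab
  | 1 => exact hbc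
  | 2 => exact hca

lemma IsCycleSubgraph.indicator_ne_zero {ends : E → Sym2 V} (hrange : Set.range ends = G.edgeSet)
    (hC : IsCycleSubgraph C) :
    (fun e => if ends e ∈ C.edgeSet then 1 else 0 : E → ZMod 2) ≠ 0 := by
  obtain ⟨p, hp⟩ := hC.edgeSet_nonempty
  obtain ⟨e, rfl⟩ := hrange.ge (C.edgeSet_subset hp)
  exact Function.ne_iff.mpr ⟨e, by simp [hp]⟩

lemma sum_edgeFinset_endSum [Fintype V] (H : SimpleGraph V) (x : V → ZMod 2) :
    ∑ p ∈ H.edgeFinset, endSum x p = ∑ v, H.degree v * x v := by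
  have hends : ∀ p ∈ H.edgeFinset, endSum x p = ∑ v, if v ∈ p then x v else 0 := fun p hp => by
    induction p with
    | _ u w =>
      have huw : u ≠ w := H.ne_of_adj (H.mem_edgeFinset.mp hp)
      rw [endSum_mk, ← Finset.sum_pair huw, ← Finset.sum_filter]
      refine Finset.sum_congr ?_ fun _ _ => rfl
      ext v
      simp
  rw [Finset.sum_congr rfl hends, Finset.sum_comm]
  refine Finset.sum_congr rfl fun v _ => ?_
  rw [← Finset.sum_filter, ← H.incidenceFinset_eq_filter, Finset.sum_const,
    card_incidenceFinset_eq_degree, nsmul_eq_mul]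

lemma IsCycleSubgraph.even_degree_spanningCoe [Fintype V] (hC : IsCycleSubgraph C) (v : V) :
    Even (C.spanningCoe.degree v) := by
  rw [← C.spanningCoe.card_neighborSet_eq_degree, ← Nat.card_eq_fintype_card, Nat.card_coe_set_eq]
  by_cases hv : v ∈ C.verts
  · exact ⟨1, hC.2 v hv⟩
  · rw [show C.spanningCoe.neighborSet v = ∅ from
      Set.eq_empty_of_forall_notMem fun w h => hv (C.edge_vert h), Set.ncard_empty]
    exact Even.zero

lemma IsCycleSubgraph.indicator_mem_cycleSpace [Finite V] [Fintype E] {ends : E → Sym2 V}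
    (hends : Function.Injective ends) (hrange : Set.range ends = G.edgeSet)
    (hC : IsCycleSubgraph C) :
    (fun e => if ends e ∈ C.edgeSet then 1 else 0) ∈ cycleSpace ends := by
  have := Fintype.ofFinite V
  refine mem_cycleSpace.mpr fun x => ?_
  have himage : ({e | ends e ∈ C.edgeSet} : Finset E).image ends = C.spanningCoe.edgeFinset := by
    ext p
    simp only [Finset.mem_image, Finset.mem_filter_univ, mem_edgeFinset,
      Subgraph.edgeSet_spanningCoe]
    refine ⟨fun ⟨_, he, hp⟩ => hp ▸ he, fun hp => ?_⟩
    obtain ⟨e, rfl⟩ : p ∈ Set.range ends := hrange ▸ C.edgeSet_subset hp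
    exact ⟨e, hp, rfl⟩
  simp only [dotProduct, mul_ite, mul_one, mul_zero, ← Finset.sum_filter, coboundary_apply]
  rw [← Finset.sum_image (f := endSum x) hends.injOn, himage, sum_edgeFinset_endSum]
  refine Finset.sum_eq_zero fun v _ => ?_
  rw [(ZMod.natCast_eq_zero_iff_even).mpr (hC.even_degree_spanningCoe v), zero_mul]

end CycleSubgraph

section TightCycle

variable {k m : ℕ} [NeZero k]

/-- The cycles of `G_{k,m+1}` of weight `2k`, as subgraphs. -/
noncomputable def tightCycle (t : TightIx k m) : (Gkl k (m + 1)).Subgraph :=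
  edgeSubgraph _ (ends '' tightEdges t)

lemma ends_mem_edgeSet_tightCycle (hk : 3 ≤ k) {t : TightIx k m} {e : GklEdge k m} :
    e.ends ∈ (tightCycle t).edgeSet ↔ e ∈ tightEdges t := by
  rw [tightCycle, edgeSet_edgeSubgraph ((Set.image_subset_range _ _).trans (range_ends hk).le),
    (ends_injective hk).mem_set_image, Finset.mem_coe]

lemma isCycleSubgraph_tightCycle (hk : 3 ≤ k) (t : TightIx k m) :
    IsCycleSubgraph (tightCycle t) := by
  have hadj : ∀ e : GklEdge k m, (Gkl k (m + 1)).Adj e.src e.tgt := ends_mem_edgeSet hk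
  cases t with
  | row i =>
    have h : tightCycle (.row i) =
        edgeSubgraph (Gkl k (m + 1)) (Set.range fun j => s((i, j), (i, j + 1))) := by
      rw [tightCycle, tightEdges, Finset.coe_image, Finset.coe_univ, Set.image_univ,
        ← Set.range_comp]
      rfl
    rw [h]
    exact isCycleSubgraph_edgeSubgraph_range hk (Prod.mk_right_injective i) fun j => hadj (hor i j)
  | up r j =>
    have h : tightCycle (.up r j) = edgeSubgraph (Gkl k (m + 1))
        {s((r.castSucc, j), (r.castSucc, j + 1)), s((r.castSucc, j + 1), (r.succ, j + 1)),
          s((r.succ, j + 1), (r.castSucc, j))} := by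
      rw [Sym2.eq_swap (a := (r.succ, j + 1))]
      simp only [tightCycle, tightEdges, Finset.coe_insert, Finset.coe_singleton,
        Set.image_insert_eq, Set.image_singleton, ends, src, tgt]
    rw [h]
    exact isCycleSubgraph_edgeSubgraph_triangle (hadj (hor r.castSucc j)) (hadj (vert r (j + 1)))
      (hadj (diag r j)).symm
  | down r j =>
    have h : tightCycle (.down r j) = edgeSubgraph (Gkl k (m + 1))
        {s((r.succ, j + 1), (r.succ, j)), s((r.succ, j), (r.castSucc, j)),
          s((r.castSucc, j), (r.succ, j + 1))} := by
      rw [Sym2.eq_swap (a := (r.succ, j)), Sym2.eq_swap (a := (r.succ, j + 1))]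
      simp only [tightCycle, tightEdges, Finset.coe_insert, Finset.coe_singleton,
        Set.image_insert_eq, Set.image_singleton, ends, src, tgt]
    rw [h]
    exact isCycleSubgraph_edgeSubgraph_triangle (hadj (hor r.succ j)).symm (hadj (vert r j)).symm
      (hadj (diag r j))

lemma tightEdges_injective : Function.Injective (tightEdges : TightIx k m → _) := by
  intro t t' h
  have hmem : ∀ e, e ∈ tightEdges t ↔ e ∈ tightEdges t' := fun e => by rw [h]
  cases t with
  | row i =>
    cases t' with
    | row i' => simpa [tightEdges, eq_comm] using hmem (hor i 0)
    | up r j | down r j => simpa [tightEdges] using hmem (diag r j)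
  | up r j | down r j =>
    have hdiag := hmem (diag r j)
    have hdown := hmem (hor r.succ j)
    have := Fin.castSucc_lt_succ (i := r)
    cases t' <;> grind [tightEdges]

lemma tightCycle_injective (hk : 3 ≤ k) : Function.Injective (tightCycle : TightIx k m → _) :=
  fun t t' h => tightEdges_injective <| Finset.ext fun e => by
    rw [← ends_mem_edgeSet_tightCycle hk, h, ends_mem_edgeSet_tightCycle hk]

variable {C : (Gkl k (m + 1)).Subgraph}

lemma IsCycleSubgraph.two_mul_le_sum_wt (hk : 3 ≤ k) (hC : IsCycleSubgraph C) :
    2 * k ≤ ∑ e : GklEdge k m with e.ends ∈ C.edgeSet, e.wt := by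
  have := _root_.two_mul_le_sum_wt hk
    (hC.indicator_mem_cycleSpace (ends_injective hk) (range_ends hk))
    (hC.indicator_ne_zero (range_ends hk))
  simpa using this

lemma IsCycleSubgraph.exists_tightCycle_eq (hk : 3 ≤ k) (hC : IsCycleSubgraph C)
    (hw : ∑ e : GklEdge k m with e.ends ∈ C.edgeSet, e.wt = 2 * k) : ∃ t, tightCycle t = C := by
  obtain ⟨t, ht⟩ := exists_support_eq_tightEdges hk
    (hC.indicator_mem_cycleSpace (ends_injective hk) (range_ends hk))
    (hC.indicator_ne_zero (range_ends hk))
    (by simpa using hw)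
  refine ⟨t, ?_⟩
  have himage : ends '' tightEdges t = C.edgeSet := by
    ext p
    refine ⟨?_, fun hp => ?_⟩
    · rintro ⟨e, he, rfl⟩
      simpa using (ht e).mpr he
    · obtain ⟨e, rfl⟩ := (range_ends hk).ge (C.edgeSet_subset hp)
      exact ⟨e, (ht e).mp (by simp [hp]), rfl⟩
  rw [tightCycle, himage, edgeSubgraph_edgeSet hC]

end TightCycle

/-! ### Families of tight cycles covering all edges equally often -/

section Multiset

variable {α β E : Type*}

lemma countP_eq_sum_count [Fintype α] [DecidableEq α] (M : Multiset α) (p : α → Prop)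
    [DecidablePred p] : M.countP p = ∑ a, if p a then M.count a else 0 := by
  rw [Multiset.countP_eq_card_filter, ← Multiset.sum_count_eq_card fun a _ => Finset.mem_univ a]
  simp only [Multiset.count_filter]

lemma count_bind_of_nodup [DecidableEq β] (A : Multiset α) {f : α → Multiset β}
    (hf : ∀ a, (f a).Nodup) (b : β) : (A.bind f).count b = A.countP (b ∈ f ·) := by
  induction A using Multiset.induction with
  | empty => rfl
  | cons a A ih =>
    rw [Multiset.cons_bind, Multiset.count_add, ih, Multiset.countP_cons, add_comm,
      Multiset.count_eq_of_nodup (hf a)]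

lemma sum_map_sum_filter [Fintype E] (S : Multiset α) (r : α → E → Prop)
    [∀ e, DecidablePred (r · e)] (w : E → ℕ) :
    (S.map fun a => ∑ e with r a e, w e).sum = ∑ e, S.countP (r · e) * w e := by
  induction S using Multiset.induction with
  | empty => simp
  | cons a S ih =>
    rw [Multiset.map_cons, Multiset.sum_cons, ih, add_comm]
    simp only [Multiset.countP_cons, add_mul, ite_mul, one_mul, zero_mul, Finset.sum_add_distrib,
      Finset.sum_filter]

lemma eq_of_forall_le_of_sum_map_eq {S : Multiset α} {f : α → ℕ} {c : ℕ} (hle : ∀ a ∈ S, c ≤ f a)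
    (hsum : (S.map f).sum = S.card * c) : ∀ a ∈ S, f a = c := by
  by_contra! h
  obtain ⟨a, ha, hne⟩ := h
  have := Multiset.sum_lt_sum hle ⟨a, ha, (hle a ha).lt_of_ne' hne⟩
  simp [hsum] at this

lemma countP_pair (p : α → Prop) [DecidablePred p] (a b : α) :
    Multiset.countP p {a, b} = (if p a then 1 else 0) + if p b then 1 else 0 := by
  rw [Multiset.insert_eq_cons, Multiset.countP_cons, ← Multiset.cons_zero, Multiset.countP_cons,
    Multiset.countP_zero, zero_add, add_comm]

lemma countP_le_succ {m : ℕ} (A : Multiset (Fin (m + 1))) (r : Fin m) :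
    A.countP (· ≤ r.succ) = A.countP (· ≤ r.castSucc) + A.count r.succ := by
  induction A using Multiset.induction with
  | empty => rfl
  | cons a A ih =>
    rw [Multiset.countP_cons, Multiset.countP_cons, Multiset.count_cons, ih]
    simp only [Fin.le_iff_val_le_val, Fin.ext_iff, Fin.val_succ, Fin.val_castSucc]
    split_ifs <;> omega

end Multiset

namespace TightIx

variable {k m : ℕ}

/-- Tight cycles as a disjoint union, used to sum over them. -/
def equivSum (k m : ℕ) :
    Fin (m + 1) ⊕ (Fin m × ZMod k) ⊕ (Fin m × ZMod k) ≃ TightIx k m where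
  toFun := Sum.elim row (Sum.elim (fun p => up p.1 p.2) fun p => down p.1 p.2)
  invFun
    | row i => .inl i
    | up r j => .inr (.inl (r, j))
    | down r j => .inr (.inr (r, j))
  left_inv := by rintro (_ | _ | _) <;> rfl
  right_inv := by rintro (_ | _ | _) <;> rfl

instance [NeZero k] : Fintype (TightIx k m) := Fintype.ofEquiv _ (equivSum k m)

lemma sum_eq [NeZero k] (f : TightIx k m → ℕ) :
    ∑ t, f t = (∑ i, f (row i)) + ((∑ r, ∑ j, f (up r j)) + ∑ r, ∑ j, f (down r j)) := by
  rw [← (equivSum k m).sum_comp, Fintype.sum_sum_type, Fintype.sum_sum_type]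
  simp only [Fintype.sum_prod_type]
  rfl

end TightIx

section Cover

variable {k m : ℕ} [NeZero k]

/-- The number of members of a family of tight cycles that contain the edge `e`. -/
noncomputable def coverCount (M : Multiset (TightIx k m)) (e : GklEdge k m) : ℕ :=
  M.countP fun t => e ∈ tightEdges t

lemma coverCount_vert (M : Multiset (TightIx k m)) (r : Fin m) (j : ZMod k) :
    coverCount M (vert r j) = M.count (.up r (j - 1)) + M.count (.down r j) := by
  rw [coverCount, countP_eq_sum_count, TightIx.sum_eq]
  simp [tightEdges, ite_and, ← sub_eq_iff_eq_add]

lemma coverCount_diag (M : Multiset (TightIx k m)) (r : Fin m) (j : ZMod k) :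
    coverCount M (diag r j) = M.count (.up r j) + M.count (.down r j) := by
  rw [coverCount, countP_eq_sum_count, TightIx.sum_eq]
  simp [tightEdges, ite_and]

lemma coverCount_hor (M : Multiset (TightIx k m)) (i : Fin (m + 1)) (j : ZMod k) :
    coverCount M (hor i j) = M.count (.row i) +
      ((∑ r : Fin m, if r.castSucc = i then M.count (.up r j) else 0) +
        ∑ r : Fin m, if r.succ = i then M.count (.down r j) else 0) := by
  rw [coverCount, countP_eq_sum_count, TightIx.sum_eq]
  simp [tightEdges, ite_and, eq_comm (a := i)]

/-- The family of tight cycles attached to the row `a`: the cycle `C^a`, the `up` triangles inside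
it and the `down` triangles outside it. It covers every edge once. -/
noncomputable def rowCover (k : ℕ) [NeZero k] (a : Fin (m + 1)) : Finset (TightIx k m) :=
  Finset.univ.filter fun
    | .row i => i = a
    | .up r _ => r.castSucc < a
    | .down r _ => a ≤ r.castSucc

/-- The union, with multiplicities, of the families attached to a multiset of rows. -/
noncomputable def rowsCover (k : ℕ) [NeZero k] (A : Multiset (Fin (m + 1))) :
    Multiset (TightIx k m) :=
  A.bind fun a => (rowCover k a).val

lemma count_rowsCover (A : Multiset (Fin (m + 1))) (t : TightIx k m) :
    (rowsCover k A).count t = A.countP (t ∈ rowCover k ·) :=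
  count_bind_of_nodup A (fun a => (rowCover k a).nodup) t

lemma count_row_rowsCover (A : Multiset (Fin (m + 1))) (i : Fin (m + 1)) :
    (rowsCover k A).count (.row i) = A.count i := by
  rw [count_rowsCover]
  simp [rowCover, Multiset.count]

lemma count_up_rowsCover (A : Multiset (Fin (m + 1))) (r : Fin m) (j : ZMod k) :
    (rowsCover k A).count (.up r j) = A.countP (r.castSucc < ·) := by
  simp [count_rowsCover, rowCover]

lemma count_down_rowsCover (A : Multiset (Fin (m + 1))) (r : Fin m) (j : ZMod k) :
    (rowsCover k A).count (.down r j) = A.countP (· ≤ r.castSucc) := by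
  simp [count_rowsCover, rowCover]

lemma countP_gt_add_countP_le (A : Multiset (Fin (m + 1))) (i : Fin (m + 1)) :
    A.countP (i < ·) + A.countP (· ≤ i) = A.card := by
  simpa only [not_lt] using (A.card_eq_countP_add_countP (i < ·)).symm

lemma coverCount_rowsCover (A : Multiset (Fin (m + 1))) (e : GklEdge k m) :
    coverCount (rowsCover k A) e = A.card := by
  cases e with
  | vert r j =>
    rw [coverCount_vert, count_up_rowsCover, count_down_rowsCover, countP_gt_add_countP_le]
  | diag r j =>
    rw [coverCount_diag, count_up_rowsCover, count_down_rowsCover, countP_gt_add_countP_le]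
  | hor i j =>
    have hup : (∑ r : Fin m, if r.castSucc = i then (rowsCover k A).count (.up r j) else 0) =
        A.countP (i < ·) := by
      simp only [count_up_rowsCover]
      cases i using Fin.lastCases with
      | last =>
        simpa using (Multiset.countP_eq_zero.mpr fun a _ => (Fin.le_last a).not_gt).symm
      | cast r => simp
    have hdown : A.count i + (∑ r : Fin m, if r.succ = i then (rowsCover k A).count (.down r j)
        else 0) = A.countP (· ≤ i) := by
      simp only [count_down_rowsCover]
      cases i using Fin.cases with
      | zero => simp [Multiset.count, eq_comm]
      | succ r => simp [countP_le_succ, add_comm]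
    rw [coverCount_hor, count_row_rowsCover, add_left_comm, hup, hdown, countP_gt_add_countP_le]

lemma rowsCover_injective : Function.Injective (rowsCover k : Multiset (Fin (m + 1)) → _) :=
  fun A B h => Multiset.ext.mpr fun i => by
    rw [← count_row_rowsCover (k := k), h, count_row_rowsCover]

variable {M : Multiset (TightIx k m)} {c : ℕ}

lemma count_up_eq_count_up_zero (hM : ∀ e, coverCount M e = c) (r : Fin m) (j : ZMod k) :
    M.count (.up r j) = M.count (.up r 0) := by
  refine eq_of_forall_ne_eq_add_one (g := fun j => M.count (.up r j)) 0 (fun j _ => ?_) j 0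
  have hvert := hM (vert r (j + 1))
  have hdiag := hM (diag r (j + 1))
  rw [coverCount_vert, add_sub_cancel_right] at hvert
  rw [coverCount_diag] at hdiag
  exact Nat.add_right_cancel (hvert.trans hdiag.symm)

lemma sum_count_up_add_countP_le (hM : ∀ e, coverCount M e = c) {A : Multiset (Fin (m + 1))}
    (hA : ∀ i, A.count i = M.count (.row i)) (i : Fin (m + 1)) :
    (∑ r : Fin m, if r.castSucc = i then M.count (.up r 0) else 0) + A.countP (· ≤ i) = c := by
  have hhor := fun i => hM (hor i 0)
  simp only [coverCount_hor, ← hA] at hhor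
  induction i using Fin.induction with
  | zero =>
    rw [← hhor 0]
    simp [Multiset.count, eq_comm, add_comm]
  | succ r ih =>
    have hdiag := hM (diag r 0)
    have hsucc := hhor r.succ
    rw [coverCount_diag] at hdiag
    simp only [Fin.castSucc_inj, Fin.succ_inj, Finset.sum_ite_eq', Finset.mem_univ, if_true]
      at ih hsucc
    rw [countP_le_succ]
    omega

theorem exists_rowsCover_eq (hM : ∀ e, coverCount M e = c) :
    ∃ A : Multiset (Fin (m + 1)), A.card = c ∧ rowsCover k A = M := by
  obtain ⟨A, hA⟩ : ∃ A : Multiset (Fin (m + 1)), ∀ i, A.count i = M.count (.row i) :=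
    ⟨∑ i, Multiset.replicate (M.count (.row i)) i, fun i => by
      simp [Multiset.count_sum', Multiset.count_replicate]⟩
  have hle := sum_count_up_add_countP_le hM hA
  have hcard : A.card = c := by
    rw [← hle (Fin.last m), ← countP_gt_add_countP_le A (Fin.last m)]
    simp [Multiset.countP_eq_zero, Fin.le_last]
  refine ⟨A, hcard, Multiset.ext.mpr fun t => ?_⟩
  have hup : ∀ r j, M.count (.up r j) = A.countP (r.castSucc < ·) := fun r j => by
    have := hle r.castSucc
    simp only [Fin.castSucc_inj, Finset.sum_ite_eq', Finset.mem_univ, if_true] at this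
    rw [count_up_eq_count_up_zero hM]
    have := countP_gt_add_countP_le A r.castSucc
    omega
  cases t with
  | row i => rw [count_row_rowsCover, hA]
  | up r j => rw [count_up_rowsCover, hup]
  | down r j =>
    have hdiag := hM (diag r j)
    rw [coverCount_diag, hup, ← hcard, ← countP_gt_add_countP_le A r.castSucc] at hdiag
    rw [count_down_rowsCover, Nat.add_left_cancel hdiag]

theorem nodup_rowsCover_iff (hm : 1 ≤ m) {A : Multiset (Fin (m + 1))} (hA : A.card = 2) :
    (rowsCover k A).Nodup ↔ A = {0, Fin.last m} := by
  obtain ⟨n, rfl⟩ : ∃ n, m = n + 1 := ⟨m - 1, by omega⟩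
  rw [Multiset.nodup_iff_count_le_one]
  constructor
  · intro h
    obtain ⟨a, b, rfl⟩ := Multiset.card_eq_two.mp hA
    have hzero : a = 0 ∨ b = 0 := by
      have := h (.up 0 0)
      rw [count_up_rowsCover, countP_pair] at this
      by_contra! hne
      simp [Fin.pos_iff_ne_zero, hne] at this
    have hlast : a = Fin.last (n + 1) ∨ b = Fin.last (n + 1) := by
      have := h (.down (Fin.last n) 0)
      rw [count_down_rowsCover, countP_pair] at this
      by_contra! hne
      have hle : ∀ i, i ≠ Fin.last (n + 1) → i ≤ (Fin.last n).castSucc := fun i hi =>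
        Nat.le_of_lt_succ (Fin.lt_last_iff_ne_last.mpr hi)
      simp [hle, hne] at this
    have hne : (0 : Fin (n + 2)) ≠ Fin.last (n + 1) := Fin.last_pos.ne
    rcases hzero with rfl | rfl <;> rcases hlast with h | h
    · exact absurd h hne
    · rw [h]
    · rw [h, Multiset.pair_comm]
    · exact absurd h hne
  · rintro rfl (i | ⟨r, j⟩ | ⟨r, j⟩)
    · rw [count_row_rowsCover]
      exact Multiset.nodup_iff_count_le_one.mp (by simp [Fin.last_pos.ne]) i
    · rw [count_up_rowsCover, countP_pair]
      simp
    · rw [count_down_rowsCover, countP_pair]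
      simp

end Cover

section CDC

variable {k m : ℕ} [NeZero k] {S : Multiset (Gkl k (m + 1)).Subgraph}

lemma GklEdge.sum_wt (hk : 3 ≤ k) : ∑ e : GklEdge k m, e.wt = k * (2 * k * m + 2) := by
  obtain ⟨n, rfl⟩ : ∃ n, k = n + 1 := ⟨k - 1, by omega⟩
  simp only [GklEdge.sum_eq, wt, Finset.sum_const, Finset.card_univ, ZMod.card, Fintype.card_fin,
    smul_eq_mul, Nat.add_sub_cancel]
  ring

lemma IsCDC.sum_map_wt (hk : 3 ≤ k) (hS : IsCDC (Gkl k (m + 1)) S) :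
    (S.map fun C => ∑ e : GklEdge k m with e.ends ∈ C.edgeSet, e.wt).sum =
      (2 * k * m + 2) * (2 * k) := by
  rw [sum_map_sum_filter S (fun C (e : GklEdge k m) => e.ends ∈ C.edgeSet)]
  simp only [hS.2 _ (ends_mem_edgeSet hk _)]
  rw [← Finset.mul_sum, GklEdge.sum_wt hk]
  ring

lemma IsCDC.exists_map_tightCycle_eq (hk : 3 ≤ k) (hS : IsCDC (Gkl k (m + 1)) S)
    (hcard : S.card = 2 * k * m + 2) : ∃ M : Multiset (TightIx k m), M.map tightCycle = S := by
  have htight := eq_of_forall_le_of_sum_map_eq (fun C hC => (hS.1 C hC).two_mul_le_sum_wt hk)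
    (hcard ▸ hS.sum_map_wt hk)
  have : CanLift _ _ tightCycle fun C : (Gkl k (m + 1)).Subgraph => ∃ t, tightCycle t = C :=
    ⟨fun _ => id⟩
  exact CanLift.prf S fun C hC => (hS.1 C hC).exists_tightCycle_eq hk (htight C hC)

lemma isCDC_map_tightCycle_iff (hk : 3 ≤ k) {M : Multiset (TightIx k m)} :
    IsCDC (Gkl k (m + 1)) (M.map tightCycle) ↔ ∀ e, coverCount M e = 2 := by
  have hcycle : ∀ C ∈ M.map tightCycle, IsCycleSubgraph C := fun C hC => by
    obtain ⟨t, -, rfl⟩ := Multiset.mem_map.mp hC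
    exact isCycleSubgraph_tightCycle hk t
  rw [IsCDC, and_iff_right hcycle, ← range_ends hk, Set.forall_mem_range]
  simp only [Multiset.countP_map, ← Multiset.countP_eq_card_filter,
    ends_mem_edgeSet_tightCycle hk, coverCount]

lemma IsCDC.card_map_tightCycle (hk : 3 ≤ k) {M : Multiset (TightIx k m)}
    (hM : IsCDC (Gkl k (m + 1)) (M.map tightCycle)) :
    (M.map tightCycle).card = 2 * k * m + 2 := by
  have hsum := hM.sum_map_wt hk
  simp only [Multiset.map_map, Function.comp_def, ends_mem_edgeSet_tightCycle hk,
    Finset.filter_univ_mem, sum_wt_tightEdges hk, Multiset.map_const', Multiset.sum_replicate,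
    smul_eq_mul] at hsum
  rw [Multiset.card_map]
  exact Nat.eq_of_mul_eq_mul_right (by omega) hsum

theorem isCDC_and_card_iff (hk : 3 ≤ k) :
    IsCDC (Gkl k (m + 1)) S ∧ S.card = 2 * k * m + 2 ↔
      ∃ A : Multiset (Fin (m + 1)), A.card = 2 ∧ (rowsCover k A).map tightCycle = S := by
  constructor
  · rintro ⟨hS, hcard⟩
    obtain ⟨M, rfl⟩ := hS.exists_map_tightCycle_eq hk hcard
    obtain ⟨A, hA, rfl⟩ := exists_rowsCover_eq ((isCDC_map_tightCycle_iff hk).mp hS)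
    exact ⟨A, hA, rfl⟩
  · rintro ⟨A, hA, rfl⟩
    have hS := (isCDC_map_tightCycle_iff hk).mpr fun e => (coverCount_rowsCover A e).trans hA
    exact ⟨hS, hS.card_map_tightCycle hk⟩

theorem ncard_isCDC_Gkl (hk : 3 ≤ k) :
    {S | IsCDC (Gkl k (m + 1)) S ∧ S.card = 2 * k * m + 2}.ncard = (m + 1) * (m + 1 + 1) / 2 := by
  have himage : {S | IsCDC (Gkl k (m + 1)) S ∧ S.card = 2 * k * m + 2} =
      (fun A => (rowsCover k A).map tightCycle) '' {A : Multiset (Fin (m + 1)) | A.card = 2} :=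
    Set.ext fun S => isCDC_and_card_iff hk
  have hinj : Function.Injective fun A : Multiset (Fin (m + 1)) =>
      (rowsCover k A).map tightCycle :=
    (Multiset.map_injective (tightCycle_injective hk)).comp rowsCover_injective
  rw [himage, Set.ncard_image_of_injective _ hinj, ← Nat.card_coe_set_eq]
  change Nat.card (Sym (Fin (m + 1)) 2) = _
  rw [Nat.card_eq_fintype_card, Sym.card_sym_eq_multichoose, Nat.multichoose_eq, Fintype.card_fin,
    Nat.choose_two_right, Nat.add_sub_assoc one_le_two, mul_comm]
  rfl

theorem ncard_true_isCDC_Gkl (hk : 3 ≤ k) (hm : 1 ≤ m) :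
    {S | IsCDC (Gkl k (m + 1)) S ∧ S.card = 2 * k * m + 2 ∧ S.Nodup}.ncard = 1 := by
  refine Set.ncard_eq_one.mpr ⟨(rowsCover k {0, Fin.last m}).map tightCycle, ?_⟩
  ext S
  rw [Set.mem_ofPred_eq, ← and_assoc, isCDC_and_card_iff hk, Set.mem_singleton_iff]
  have hnodup := fun A => Multiset.nodup_map_iff_of_injective (s := rowsCover k A)
    (tightCycle_injective (m := m) hk)
  constructor
  · rintro ⟨⟨A, hA, rfl⟩, hS⟩
    rw [(nodup_rowsCover_iff hm hA).mp ((hnodup A).mp hS)]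
  · rintro rfl
    exact ⟨⟨_, rfl, rfl⟩, (hnodup _).mpr ((nodup_rowsCover_iff hm rfl).mpr rfl)⟩

end CDC

/-- For all `k ≥ 3`, `ℓ ≥ 2`, the graph `G_{k,ℓ}` is planar with `f = 2k(ℓ-1)+2` faces
(equivalently, by Euler's formula, it is planar, connected, and has `kℓ` vertices and
`k(3ℓ-2)` edges), has exactly `ℓ(ℓ+1)/2` CDCs of size `f` and exactly one true CDC of
size `f`; moreover it is 3-connected when `k = 3` and `ℓ ≥ 3`, and 4-connected otherwise. -/
theorem statement_6 (k l : ℕ) [NeZero k] (hk : 3 ≤ k) (hl : 2 ≤ l) :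
    IsPlanar (Gkl k l) ∧
    (Gkl k l).Connected ∧
    (Gkl k l).edgeSet.ncard + 2 = k * l + (2 * k * (l - 1) + 2) ∧
    {S : Multiset (Gkl k l).Subgraph |
        IsCDC (Gkl k l) S ∧ Multiset.card S = 2 * k * (l - 1) + 2}.ncard
      = l * (l + 1) / 2 ∧
    {S : Multiset (Gkl k l).Subgraph |
        IsCDC (Gkl k l) S ∧ Multiset.card S = 2 * k * (l - 1) + 2 ∧ S.Nodup}.ncard
      = 1 ∧
    ((k = 3 ∧ 3 ≤ l) → IsKConnected 3 (Gkl k l)) ∧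
    (¬ (k = 3 ∧ 3 ≤ l) → IsKConnected 4 (Gkl k l)) := by
  obtain ⟨m, rfl⟩ : ∃ m, l = m + 1 := ⟨l - 1, by omega⟩
  have hm : 1 ≤ m := by omega
  refine ⟨isPlanar_Gkl hk, connected_Gkl hk, ?_, ncard_isCDC_Gkl hk, ncard_true_isCDC_Gkl hk hm,
    fun _ => isKConnected_Gkl hk hm (by omega) (Or.inl hk),
    fun h => isKConnected_Gkl hk hm le_rfl (by omega)⟩
  rw [ncard_edgeSet_Gkl hk, Nat.add_sub_cancel]
  ring
end

section
/- Let c be a positive integer different from 2 and let A be the antiprism on n = 2k vertices with k > 3c+3. Then the number of CDCs of A of size exactly n+2−c is at most 4·(e/c)^{2c}·(3c+1)·p(3c)·n^{5c}, where p denotes the integer partition function. In particular, the number of (n+2−c)-CDCs of A is bounded by f(c)·g(n,c) where f depends only on c and g(n,c) = n^{5c} is polynomial in n of degree 5c. -/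
/-!
Call the edges `{i, i + 1}` short and the edges `{i, i + 2}` long. A cycle that avoids one of the
`n` cuts between consecutive vertices is local: it crosses every cut an even number of times, and so
it consists of two short edges and a run of `m ≥ 1` consecutive long ones, a triangle if `m = 1`.
The other cycles are global: they cross every cut.

A cover has `2n` short edges, `2n` long edges and six crossings at each cut, an even number of which
belong to global cycles. Double counting shows that a cover by `n + 2 - c` cycles with `c ≠ 2` has
one global cycle and `n - r` local ones, where `r = c - 1`, or two global cycles and `n - r` local
ones, where `r = c`. Either way, the global cycles have `2r` short edges altogether, and the local
ones have at most `2r` long edges beyond one each.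

The degrees being even, a global cycle is determined by its short edges and two of its long edges;
the local cycles other than triangles are described by a word of length `2r` over an alphabet of
`n + 1` letters; and the triangles fill up the long edges that remain. With `q` global cycles there
are thus at most `(qn choose 2r) 4 ^ q (n + 1) ^ (2r)` covers.
-/

open SimpleGraph

attribute [local instance] Classical.propDecidable

/-- The antiprism on `2k` vertices: the square of the cycle `C_{2k}`. -/
def antiprism (k : ℕ) : SimpleGraph (ZMod (2 * k)) :=
  SimpleGraph.fromRel fun v w => w = v + 1 ∨ w = v + 2

theorem natCast_ne_zero_of_lt {n t : ℕ} (h0 : 0 < t) (ht : t < n) : (t : ZMod n) ≠ 0 :=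
  (ZMod.natCast_eq_zero_iff t n).not.2 (Nat.not_dvd_of_pos_of_lt h0 ht)

theorem exists_eq_add_natCast {n : ℕ} [NeZero n] (j i : ZMod n) : ∃ t < n, i = j + (t : ℕ) :=
  ⟨(i - j).val, ZMod.val_lt _, by simp⟩

section MultisetSums

variable {α β : Type*}

theorem sum_map_boole (s : Multiset α) (p : α → Prop) [DecidablePred p] :
    (s.map fun a => if p a then 1 else 0).sum = s.countP p := by
  induction s using Multiset.induction_on with
  | empty => simp
  | cons a s ih => simp [Multiset.countP_cons, ih, add_comm]

theorem sum_map_univ_sum [Fintype β] (s : Multiset α) (f : α → β → ℕ) :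
    (s.map fun a => ∑ b, f a b).sum = ∑ b, (s.map fun a => f a b).sum :=
  Multiset.sum_map_sum_map s Finset.univ.val

theorem sum_map_filter_add_sum_map_filter_not (s : Multiset α) (p : α → Prop) [DecidablePred p]
    (f : α → ℕ) :
    ((s.filter p).map f).sum + ((s.filter fun a => ¬ p a).map f).sum = (s.map f).sum := by
  rw [← Multiset.sum_add, ← Multiset.map_add, Multiset.filter_add_not]

theorem sum_map_filter_le (s : Multiset α) (p : α → Prop) [DecidablePred p] (f : α → ℕ) :
    ((s.filter p).map f).sum ≤ (s.map f).sum :=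
  le_self_add.trans_eq (sum_map_filter_add_sum_map_filter_not s p f)

theorem card_le_sum_map {s : Multiset α} {f : α → ℕ} (h : ∀ a ∈ s, 1 ≤ f a) :
    Multiset.card s ≤ (s.map f).sum := by
  simpa using Multiset.sum_map_le_sum_map (fun _ => 1) f h

theorem sum_map_sub_one_add_card {s : Multiset α} {f : α → ℕ} (h : ∀ a ∈ s, 1 ≤ f a) :
    (s.map fun a => f a - 1).sum + Multiset.card s = (s.map f).sum := by
  rw [← Multiset.map_congr rfl fun a ha => Nat.sub_add_cancel (h a ha), Multiset.sum_map_add]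
  simp

theorem injOn_multiset_map {f : α → β} {t : Set α} (hf : t.InjOn f) :
    {s : Multiset α | ∀ a ∈ s, a ∈ t}.InjOn (Multiset.map f) := by
  intro s hs s' hs' h
  rcases isEmpty_or_nonempty α with hα | hα
  · exact Subsingleton.elim s s'
  have retract : ∀ u : Multiset α, (∀ a ∈ u, a ∈ t) →
      (u.map f).map (Function.invFunOn f t) = u := fun u hu => by
    rw [Multiset.map_map]
    exact (Multiset.map_congr rfl fun a ha => hf.leftInvOn_invFunOn (hu a ha)).trans u.map_id'
  rw [← retract s hs, h, retract s' hs']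

end MultisetSums

/-- A subgraph of the square of the `n`-cycle, given by the multiplicities of its edges: `short i`
is that of `{i, i + 1}` and `long i` that of `{i, i + 2}`. -/
@[ext]
structure EdgeVec (n : ℕ) where
  short : ZMod n → ℕ
  long : ZMod n → ℕ

namespace EdgeVec

variable {n : ℕ} {x y : EdgeVec n} {i j v : ZMod n}

/-- The degree of the vertex `i`. -/
def deg (x : EdgeVec n) (i : ZMod n) : ℕ :=
  x.short i + x.short (i - 1) + x.long i + x.long (i - 2)

/-- The number of edges crossing the cut between `i` and `i + 1`; the edges available there are
`{i, i + 1}`, `{i, i + 2}` and `{i - 1, i + 1}`. -/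
def crossing (x : EdgeVec n) (i : ZMod n) : ℕ := x.short i + x.long i + x.long (i - 1)

/-- An element of the cycle space: all multiplicities are `0` or `1`, and all degrees are even. -/
structure IsEven (x : EdgeVec n) : Prop where
  short_le : ∀ i, x.short i ≤ 1
  long_le : ∀ i, x.long i ≤ 1
  even_deg : ∀ i, Even (deg x i)

/-- A cycle. Connectedness is encoded by saying that a set `W` of vertices that no edge leaves and
that contains one vertex of the cycle contains all of them. -/
structure IsCycle (x : EdgeVec n) : Prop extends IsEven x where
  deg_le : ∀ i, deg x i ≤ 2
  exists_deg_eq_two : ∃ i, deg x i = 2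
  connected : ∀ W : Set (ZMod n),
    (∀ i, x.short i = 1 → (i ∈ W ↔ i + 1 ∈ W)) → (∀ i, x.long i = 1 → (i ∈ W ↔ i + 2 ∈ W)) →
    ∀ i j, deg x i ≠ 0 → deg x j ≠ 0 → i ∈ W → j ∈ W

/-- A vector that avoids some cut. The cycles that do not are those that go around. -/
def IsLocal (x : EdgeVec n) : Prop := ∃ j, crossing x j = 0

/-- The local cycle on the consecutive vertices `i, …, i + m + 1`: two short edges at the ends and
`m` long edges. -/
noncomputable def loc (i : ZMod n) (m : ℕ) : EdgeVec n where
  short v := if v = i ∨ v = i + m then 1 else 0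
  long v := if ∃ s < m, v = i + (s : ℕ) then 1 else 0

theorem IsCycle.deg_eq (h : IsCycle x) (i : ZMod n) : deg x i = 0 ∨ deg x i = 2 := by
  have hle := h.deg_le i
  have heven := Nat.even_iff.1 (h.even_deg i)
  omega

/-! ### Local cycles -/

theorem crossing_add_crossing_add_one (x : EdgeVec n) (j : ZMod n) :
    crossing x j + crossing x (j + 1) = deg x (j + 1) + 2 * x.long j := by
  have e : j + 1 - 2 = j - 1 := by ring
  simp only [crossing, deg, add_sub_cancel_right, e]
  ring

theorem IsEven.even_crossing [NeZero n] (h : IsEven x) (hj : Even (crossing x j)) (i : ZMod n) :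
    Even (crossing x i) := by
  obtain ⟨t, -, rfl⟩ := exists_eq_add_natCast j i
  induction t with
  | zero => simpa using hj
  | succ t ih =>
    have hsum : Even (crossing x (j + t) + crossing x (j + t + 1)) := by
      rw [crossing_add_crossing_add_one]
      exact (h.even_deg _).add (even_two_mul _)
    rw [Nat.cast_succ, ← add_assoc]
    exact (Nat.even_add.1 hsum).1 ih

theorem IsCycle.exists_first [NeZero n] (h : IsCycle x) (hj : crossing x j = 0) :
    ∃ i, crossing x (i - 1) = 0 ∧ deg x i = 2 := by
  by_contra! hfirst
  have avoids : ∀ t : ℕ, crossing x (j + t) = 0 := fun t => by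
    induction t with
    | zero => simpa using hj
    | succ t ih =>
      have hdeg := h.deg_eq (j + t + 1)
      have hne := hfirst (j + t + 1) (by simpa using ih)
      have hsum := crossing_add_crossing_add_one x (j + t)
      have hlong : x.long (j + t) = 0 := by
        simp only [crossing] at ih
        omega
      rw [Nat.cast_succ, ← add_assoc]
      omega
  obtain ⟨v, hv⟩ := h.exists_deg_eq_two
  obtain ⟨t, -, hvt⟩ := exists_eq_add_natCast j (v - 1)
  exact hfirst v (hvt ▸ avoids t) hv

theorem IsCycle.exists_eq_add_of_crossing_eq_zero (h : IsCycle x) {t : ℕ}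
    (hi : crossing x (i - 1) = 0) (ht : crossing x (i + t) = 0) (hdi : deg x i ≠ 0)
    (hdv : deg x v ≠ 0) : ∃ s ≤ t, v = i + (s : ℕ) := by
  have e : i - 1 - 1 = i - 2 := by ring
  simp only [crossing, Nat.add_eq_zero_iff, e] at hi ht
  refine h.connected {w | ∃ s ≤ t, w = i + (s : ℕ)} (fun w hw => ⟨?_, ?_⟩) (fun w hw => ⟨?_, ?_⟩)
    i v hdi hdv ⟨0, by omega, by simp⟩
  · rintro ⟨s, hs, rfl⟩
    obtain rfl | hst := hs.eq_or_lt
    · omega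
    · exact ⟨s + 1, hst, by push_cast; ring⟩
  · rintro ⟨_ | s, hs, hws⟩
    · obtain rfl : w = i - 1 := by linear_combination hws
      omega
    · exact ⟨s, by omega, by push_cast at hws; linear_combination hws⟩
  · rintro ⟨s, hs, rfl⟩
    obtain rfl | rfl | hst : s = t ∨ t = s + 1 ∨ s + 2 ≤ t := by omega
    · omega
    · have e' : i + ((s + 1 : ℕ) : ZMod n) - 1 = i + s := by push_cast; ring
      rw [e'] at ht
      omega
    · exact ⟨s + 2, hst, by push_cast; ring⟩
  · rintro ⟨_ | _ | s, hs, hws⟩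
    · obtain rfl : w = i - 2 := by linear_combination hws
      omega
    · obtain rfl : w = i - 1 := by push_cast at hws; linear_combination hws
      omega
    · exact ⟨s, by omega, by push_cast at hws; linear_combination hws⟩

theorem IsEven.short_add_long_of_long_pred [NeZero n] (h : IsEven x) (hj : Even (crossing x j))
    (hv : x.long (v - 1) = 1) : x.short v + x.long v = 1 := by
  have hcross := Nat.even_iff.1 (h.even_crossing hj v)
  have hs := h.short_le v
  have hl := h.long_le v
  simp only [crossing] at hcross
  omega

theorem exists_long_run [NeZero n] (h : IsEven x) (hi : x.long i = 1) (hj : x.long j = 0) :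
    ∃ m, 0 < m ∧ m < n ∧ (∀ s < m, x.long (i + (s : ℕ)) = 1) ∧ x.long (i + (m : ℕ)) = 0 := by
  obtain ⟨r, hrn, rfl⟩ := exists_eq_add_natCast i j
  have hex : ∃ m : ℕ, x.long (i + m) = 0 := ⟨r, hj⟩
  refine ⟨Nat.find hex, ?_, (Nat.find_min' hex hj).trans_lt hrn, fun s hs => ?_,
    Nat.find_spec hex⟩
  · exact (Nat.find_pos hex).2 (by simp [hi])
  · have hne := Nat.find_min hex hs
    have hle := h.long_le (i + s)
    omega

theorem IsCycle.first_edges (h : IsCycle x) (hi : crossing x (i - 1) = 0) (hdi : deg x i = 2) :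
    x.short i = 1 ∧ x.long i = 1 := by
  have hs := h.short_le i
  have hl := h.long_le i
  have e : i - 1 - 1 = i - 2 := by ring
  simp only [crossing, deg, e] at hi hdi
  omega

-- By parity, each cut after the first is crossed by exactly one edge besides the long edge that
-- also crosses the previous cut: by a long one, until the second short edge closes the cycle.
theorem IsCycle.exists_closing_edge [NeZero n] (h : IsCycle x) (hi : crossing x (i - 1) = 0)
    (hdi : deg x i = 2) :
    ∃ m, 0 < m ∧ m < n ∧ (∀ s < m, x.long (i + (s : ℕ)) = 1) ∧ x.long (i + (m : ℕ)) = 0 ∧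
      (∀ s, 0 < s → s ≤ m → x.short (i + (s : ℕ)) + x.long (i + (s : ℕ)) = 1) ∧
      crossing x (i + (m + 1 : ℕ)) = 0 := by
  have hprev : x.long (i - 1) = 0 := by
    simp only [crossing] at hi
    omega
  obtain ⟨m, hm0, hmn, hrun, hend⟩ := exists_long_run h.toIsEven (h.first_edges hi hdi).2 hprev
  have hsum : ∀ s : ℕ, 0 < s → s ≤ m → x.short (i + s) + x.long (i + s) = 1 := fun s hs0 hsm =>
    h.short_add_long_of_long_pred (j := i - 1) (by simp [hi]) <| by
      rw [← hrun (s - 1) (by omega), Nat.cast_pred hs0, add_sub_assoc]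
  refine ⟨m, hm0, hmn, hrun, hend, hsum, ?_⟩
  have hdeg := h.deg_le (i + (m + 1 : ℕ))
  have hlong := hrun (m - 1) (by omega)
  have hshort := hsum m hm0 le_rfl
  have e1 : i + ((m + 1 : ℕ) : ZMod n) - 1 = i + m := by push_cast; ring
  have e2 : i + ((m + 1 : ℕ) : ZMod n) - 2 = i + (m - 1 : ℕ) := by
    rw [Nat.cast_pred hm0]; push_cast; ring
  simp only [deg, crossing, e1, e2] at hdeg ⊢
  omega

theorem IsCycle.exists_eq_loc [NeZero n] (h : IsCycle x) (hx : IsLocal x) :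
    ∃ i m, 0 < m ∧ m < n ∧ x = loc i m := by
  obtain ⟨j, hj⟩ := hx
  obtain ⟨i, hi, hdi⟩ := h.exists_first hj
  obtain ⟨m, hm0, hmn, hrun, hend, hsum, hlast⟩ := h.exists_closing_edge hi hdi
  have hsupp := fun v => h.exists_eq_add_of_crossing_eq_zero (v := v) hi hlast (by omega)
  simp only [crossing, Nat.add_eq_zero_iff] at hlast
  refine ⟨i, m, hm0, hmn, EdgeVec.ext (funext fun v => ?_) (funext fun v => ?_)⟩
  · simp only [loc]
    split_ifs with hv
    · rcases hv with rfl | rfl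
      · exact (h.first_edges hi hdi).1
      · have hm := hsum m hm0 le_rfl
        omega
    · by_contra hne
      obtain ⟨s, hs, rfl⟩ := hsupp v (by simp only [deg]; omega)
      have hs0 : s ≠ 0 := by rintro rfl; simp at hv
      have hsm : s ≠ m := by rintro rfl; simp at hv
      obtain hlt | rfl : s < m ∨ s = m + 1 := by omega
      · have hs1 := hsum s (by omega) hlt.le
        have hs2 := hrun s hlt
        omega
      · exact hne hlast.1.1
  · simp only [loc]
    split_ifs with hv
    · obtain ⟨s, hs, rfl⟩ := hv
      exact hrun s hs
    · by_contra hne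
      obtain ⟨s, hs, rfl⟩ := hsupp v (by simp only [deg]; omega)
      have hms : m ≤ s := not_lt.1 fun hlt => hv ⟨s, hlt, rfl⟩
      obtain rfl | rfl : s = m ∨ s = m + 1 := by omega
      · exact hne hend
      · exact hne hlast.1.2

/-! ### Double counting -/

/-- The number of short edges. -/
def shortCount [NeZero n] (x : EdgeVec n) : ℕ := ∑ v, x.short v

/-- The number of long edges. -/
def longCount [NeZero n] (x : EdgeVec n) : ℕ := ∑ v, x.long v

/-- A cycle double cover in terms of edge vectors. -/
structure IsCover (s : Multiset (EdgeVec n)) : Prop where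
  isCycle : ∀ x ∈ s, IsCycle x
  sum_short : ∀ v, (s.map fun x => x.short v).sum = 2
  sum_long : ∀ v, (s.map fun x => x.long v).sum = 2

/-- The local members of a family of edge vectors. -/
noncomputable def localPart (s : Multiset (EdgeVec n)) : Multiset (EdgeVec n) := s.filter IsLocal

/-- The members of a family of edge vectors that cross every cut. -/
noncomputable def globalPart (s : Multiset (EdgeVec n)) : Multiset (EdgeVec n) :=
  s.filter fun x => ¬ IsLocal x

theorem shortCount_loc [NeZero n] (i : ZMod n) {m : ℕ} (h0 : 0 < m) (hm : m < n) :
    shortCount (loc i m) = 2 := by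
  have hne : i ≠ i + (m : ZMod n) := by simpa using natCast_ne_zero_of_lt h0 hm
  have hpair : (Finset.univ.filter fun v => v = i ∨ v = i + (m : ZMod n)) =
      {i, i + (m : ZMod n)} := by
    ext v
    simp
  simp only [shortCount, loc, Finset.sum_boole, hpair, Finset.card_pair hne, Nat.cast_id]

theorem longCount_loc [NeZero n] (i : ZMod n) {m : ℕ} (hm : m < n) : longCount (loc i m) = m := by
  have himage : (Finset.univ.filter fun v => ∃ s < m, v = i + (s : ℕ)) =
      (Finset.range m).image fun s : ℕ => i + (s : ZMod n) := by
    ext v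
    simp [eq_comm]
  have hinj : Set.InjOn (fun s : ℕ => i + (s : ZMod n)) (Finset.range m) := fun s hs t ht hst => by
    rw [Finset.coe_range, Set.mem_Iio] at hs ht
    exact ((ZMod.natCast_eq_natCast_iff s t n).1 (add_left_cancel hst)).eq_of_lt_of_lt
      (hs.trans hm) (ht.trans hm)
  simp only [longCount, loc, Finset.sum_boole, himage, Finset.card_image_of_injOn hinj,
    Finset.card_range, Nat.cast_id]

theorem sum_crossing [NeZero n] (x : EdgeVec n) :
    ∑ v, crossing x v = shortCount x + 2 * longCount x := by
  have hshift : ∑ v, x.long (v - 1) = ∑ v, x.long v :=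
    Equiv.sum_comp (Equiv.subRight (1 : ZMod n)) x.long
  simp only [crossing, Finset.sum_add_distrib, shortCount, longCount, hshift]
  ring

theorem localPart_add_globalPart (s : Multiset (EdgeVec n)) : localPart s + globalPart s = s :=
  Multiset.filter_add_not _ _

theorem sum_localPart_add_sum_globalPart (s : Multiset (EdgeVec n)) (f : EdgeVec n → ℕ) :
    ((localPart s).map f).sum + ((globalPart s).map f).sum = (s.map f).sum :=
  sum_map_filter_add_sum_map_filter_not s IsLocal f

theorem card_localPart_add_card_globalPart (s : Multiset (EdgeVec n)) :
    Multiset.card (localPart s) + Multiset.card (globalPart s) = Multiset.card s := by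
  rw [← Multiset.card_add, localPart_add_globalPart]

theorem card_globalPart_le_sum_crossing (s : Multiset (EdgeVec n)) (v : ZMod n) :
    Multiset.card (globalPart s) ≤ ((globalPart s).map fun x => crossing x v).sum :=
  card_le_sum_map fun _ hx =>
    Nat.one_le_iff_ne_zero.2 fun h0 => (Multiset.mem_filter.1 hx).2 ⟨v, h0⟩

namespace IsCover

variable {s t : Multiset (EdgeVec n)}

theorem sum_crossing (h : IsCover s) (v : ZMod n) : (s.map fun x => crossing x v).sum = 6 := by
  simp only [crossing, Multiset.sum_map_add, h.sum_short, h.sum_long]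

variable [NeZero n]

theorem sum_shortCount (h : IsCover s) : (s.map shortCount).sum = 2 * n := by
  refine (sum_map_univ_sum s short).trans ?_
  simp [h.sum_short, ZMod.card, mul_comm]

theorem sum_longCount (h : IsCover s) : (s.map longCount).sum = 2 * n := by
  refine (sum_map_univ_sum s long).trans ?_
  simp [h.sum_long, ZMod.card, mul_comm]

theorem exists_eq_loc (h : IsCover s) (hx : x ∈ localPart s) :
    ∃ i m, 0 < m ∧ m < n ∧ x = loc i m :=
  (h.isCycle x (Multiset.mem_of_mem_filter hx)).exists_eq_loc (Multiset.mem_filter.1 hx).2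

theorem one_le_longCount (h : IsCover s) (hx : x ∈ localPart s) : 1 ≤ longCount x := by
  obtain ⟨i, m, h0, hm, rfl⟩ := h.exists_eq_loc hx
  rwa [longCount_loc i hm]

theorem sum_shortCount_localPart (h : IsCover s) :
    ((localPart s).map shortCount).sum = 2 * Multiset.card (localPart s) := by
  have htwo : ∀ x ∈ localPart s, shortCount x = 2 := fun x hx => by
    obtain ⟨i, m, h0, hm, rfl⟩ := h.exists_eq_loc hx
    exact shortCount_loc i h0 hm
  rw [Multiset.map_congr rfl htwo]
  simp [mul_comm]

theorem even_sum_crossing_globalPart (h : IsCover s) (v : ZMod n) :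
    Even ((globalPart s).map fun x => crossing x v).sum := by
  have hlocal : Even ((localPart s).map fun x => crossing x v).sum := by
    refine even_iff_two_dvd.2 (Multiset.dvd_sum fun d hd => ?_)
    obtain ⟨x, hx, rfl⟩ := Multiset.mem_map.1 hd
    obtain ⟨hxs, j, hj⟩ := Multiset.mem_filter.1 hx
    exact ((h.isCycle x hxs).even_crossing (j := j) (by simp [hj]) v).two_dvd
  have hsum := sum_localPart_add_sum_globalPart s fun x => crossing x v
  rw [h.sum_crossing] at hsum
  exact (Nat.even_add.1 (hsum ▸ by decide)).1 hlocal

variable {r : ℕ}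

theorem sum_shortCount_globalPart (h : IsCover s) (hr : Multiset.card (localPart s) + r = n) :
    ((globalPart s).map shortCount).sum = 2 * r := by
  have hsum := sum_localPart_add_sum_globalPart s shortCount
  rw [h.sum_shortCount, h.sum_shortCount_localPart] at hsum
  omega

theorem mul_add_sum_longCount_localPart_le (h : IsCover s)
    (hr : Multiset.card (localPart s) + r = n) {d : ℕ}
    (hd : ∀ v, d ≤ ((globalPart s).map fun x => crossing x v).sum) :
    n * d + 2 * ((localPart s).map longCount).sum ≤ 4 * n + 2 * r := by
  have hlong := sum_localPart_add_sum_globalPart s longCount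
  have hcross : n * d ≤ 2 * r + 2 * ((globalPart s).map longCount).sum := by
    calc n * d = ∑ _v : ZMod n, d := by simp [ZMod.card]
      _ ≤ ∑ v, ((globalPart s).map fun x => crossing x v).sum := Finset.sum_le_sum fun v _ => hd v
      _ = ((globalPart s).map fun x => ∑ v, crossing x v).sum :=
        (sum_map_univ_sum _ crossing).symm
      _ = 2 * r + 2 * ((globalPart s).map longCount).sum := by
        simp only [EdgeVec.sum_crossing, Multiset.sum_map_add, Multiset.sum_map_mul_left,
          h.sum_shortCount_globalPart hr]
  rw [h.sum_longCount] at hlong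
  omega

theorem sum_longCount_sub_one_le (h : IsCover s) (hr : Multiset.card (localPart s) + r = n)
    (hglobal : 0 < Multiset.card (globalPart s)) :
    ((localPart s).map fun x => longCount x - 1).sum ≤ 2 * r := by
  have hcross := h.mul_add_sum_longCount_localPart_le hr (d := 2) fun v => by
    have hge := card_globalPart_le_sum_crossing s v
    have heven := Nat.even_iff.1 (h.even_sum_crossing_globalPart v)
    omega
  have hsub := sum_map_sub_one_add_card fun x hx => h.one_le_longCount (x := x) hx
  omega

-- If all cycles are local, then there are `n` of them, and `c = 2`. Three or four global cycles
-- cross every cut at least four times, five or six of them do so six times; either way, the cover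
-- needs more long edges than there are.
theorem card_globalPart (h : IsCover s) {c : ℕ} (hc2 : c ≠ 2) (hn : 2 * c + 5 ≤ n)
    (hcard : Multiset.card s + c = n + 2) :
    Multiset.card (globalPart s) = 1 ∧ Multiset.card (localPart s) + (c - 1) = n ∨
      Multiset.card (globalPart s) = 2 ∧ Multiset.card (localPart s) + c = n := by
  have hparts := card_localPart_add_card_globalPart s
  have hshort := sum_localPart_add_sum_globalPart s shortCount
  rw [h.sum_shortCount, h.sum_shortCount_localPart] at hshort
  have hlong := card_le_sum_map fun x hx => h.one_le_longCount (x := x) hx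
  obtain ⟨r, hr⟩ := Nat.exists_eq_add_of_le (by omega : Multiset.card (localPart s) ≤ n)
  have hcross := fun d => h.mul_add_sum_longCount_localPart_le hr.symm (d := d)
  have hge := card_globalPart_le_sum_crossing s
  have heven := fun v => Nat.even_iff.1 (h.even_sum_crossing_globalPart v)
  have hle : Multiset.card (globalPart s) ≤ 6 := by
    have hsum := sum_localPart_add_sum_globalPart s fun x => crossing x 0
    rw [h.sum_crossing] at hsum
    exact (hge 0).trans (by omega)
  have hpos : Multiset.card (globalPart s) ≠ 0 := fun h0 => by
    rw [Multiset.card_eq_zero.1 h0, Multiset.map_zero, Multiset.sum_zero] at hshort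
    omega
  have hlt : Multiset.card (globalPart s) < 3 := by
    by_contra! h3
    by_cases h5 : 5 ≤ Multiset.card (globalPart s)
    · have h6 := hcross 6 fun v => by
        have hv := hge v
        have hv' := heven v
        omega
      omega
    · have h4 := hcross 4 fun v => by
        have hv := hge v
        have hv' := heven v
        omega
      omega
  omega

end IsCover

/-! ### Counting the global cycles -/

theorem IsEven.eq_of_short_of_long_zero_of_long_one [NeZero n] (hx : IsEven x) (hy : IsEven y)
    (hshort : ∀ v, x.short v = 1 ↔ y.short v = 1) (hlong0 : x.long 0 = 1 ↔ y.long 0 = 1)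
    (hlong1 : x.long 1 = 1 ↔ y.long 1 = 1) : x = y := by
  have eq_of_iff : ∀ {a b : ℕ}, a ≤ 1 → b ≤ 1 → (a = 1 ↔ b = 1) → a = b := by omega
  have hs : ∀ v, x.short v = y.short v := fun v =>
    eq_of_iff (hx.short_le v) (hy.short_le v) (hshort v)
  refine EdgeVec.ext (funext hs) (funext fun v => ?_)
  obtain ⟨t, -, rfl⟩ := exists_eq_add_natCast 0 v
  rw [zero_add]
  induction t using Nat.strong_induction_on with
  | _ t ih =>
    match t with
    | 0 => exact_mod_cast eq_of_iff (hx.long_le 0) (hy.long_le 0) hlong0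
    | 1 => exact_mod_cast eq_of_iff (hx.long_le 1) (hy.long_le 1) hlong1
    | t + 2 =>
      have hdx := hx.even_deg (t + 2 : ℕ)
      have hdy := hy.even_deg (t + 2 : ℕ)
      have e : ((t + 2 : ℕ) : ZMod n) - 2 = t := by push_cast; ring
      have hlx := hx.long_le (t + 2 : ℕ)
      have hly := hy.long_le (t + 2 : ℕ)
      simp only [deg, e, hs, ih t (by omega), Nat.even_iff] at hdx hdy
      omega

/-- The short edges of the members of a family of edge vectors. -/
noncomputable def shortEdges [NeZero n] {ι : Type*} [Fintype ι] (f : ι → EdgeVec n) :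
    Finset (ι × ZMod n) :=
  Finset.univ.filter fun p => (f p.1).short p.2 = 1

theorem card_shortEdges [NeZero n] {ι : Type*} [Fintype ι] {f : ι → EdgeVec n}
    (hf : ∀ a, IsEven (f a)) : (shortEdges f).card = ∑ a, shortCount (f a) := by
  have hite : ∀ a v, (if (f a).short v = 1 then 1 else 0) = (f a).short v := fun a v => by
    have hle := (hf a).short_le v
    split_ifs <;> omega
  simp only [shortEdges, Finset.card_filter, Fintype.sum_prod_type, hite, shortCount]

theorem encard_even_families_le [NeZero n] (ι : Type*) [Fintype ι] (m : ℕ) :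
    {f : ι → EdgeVec n | (∀ a, IsEven (f a)) ∧ ∑ a, shortCount (f a) = m}.encard ≤
      (((Fintype.card ι * n).choose m * 4 ^ Fintype.card ι : ℕ) : ℕ∞) := by
  let code (f : ι → EdgeVec n) : Finset (ι × ZMod n) × (ι → Bool × Bool) :=
    (shortEdges f, fun a => (decide ((f a).long 0 = 1), decide ((f a).long 1 = 1)))
  let codes : Finset (Finset (ι × ZMod n) × (ι → Bool × Bool)) :=
    Finset.univ.powersetCard m ×ˢ Finset.univ
  have hcodes : codes.card = (Fintype.card ι * n).choose m * 4 ^ Fintype.card ι := by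
    simp [codes, ZMod.card]
  rw [← hcodes, ← Set.encard_coe_eq_coe_finsetCard]
  refine Set.encard_le_encard_of_injOn (f := code) (fun f hf => ?_) fun f hf g hg hfg => ?_
  · simp [codes, code, card_shortEdges hf.1, hf.2]
  · simp only [code, Prod.mk.injEq, funext_iff, decide_eq_decide] at hfg
    have hshort : ∀ a v, (f a).short v = 1 ↔ (g a).short v = 1 := fun a v => by
      simpa [shortEdges] using Finset.ext_iff.1 hfg.1 (a, v)
    exact funext fun a => (hf.1 a).eq_of_short_of_long_zero_of_long_one (hg.1 a) (hshort a)
      (hfg.2 a).1 (hfg.2 a).2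

theorem encard_even_multisets_le [NeZero n] (q m : ℕ) :
    {s : Multiset (EdgeVec n) |
        Multiset.card s = q ∧ (∀ x ∈ s, IsEven x) ∧ (s.map shortCount).sum = m}.encard ≤
      (((q * n).choose m * 4 ^ q : ℕ) : ℕ∞) := by
  have hsub : {s : Multiset (EdgeVec n) |
      Multiset.card s = q ∧ (∀ x ∈ s, IsEven x) ∧ (s.map shortCount).sum = m} ⊆
      (fun f : Fin q → EdgeVec n => (List.ofFn f : Multiset (EdgeVec n))) ''
        {f | (∀ a, IsEven (f a)) ∧ ∑ a, shortCount (f a) = m} := by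
    rintro s ⟨rfl, heven, hsum⟩
    induction s using Quot.inductionOn with
    | _ l =>
      exact ⟨l.get, ⟨fun a => heven _ (List.get_mem l a),
        (Fin.sum_univ_fun_getElem l shortCount).trans ((Multiset.sum_coe _).symm.trans hsum)⟩,
        by simp⟩
  refine (Set.encard_le_encard hsub).trans ((Set.encard_image_le _ _).trans ?_)
  simpa using encard_even_families_le (n := n) (Fin q) m

/-! ### Counting the local cycles -/

/-- A triangle on three consecutive vertices. -/
def IsTriangle (x : EdgeVec n) : Prop := ∃ i, x = loc i 1

/-- The local cycles described by a word: `k` letters `none` followed by `some i` stand for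
`loc i (k + 2)`, and the letters `none` at the end are ignored. The cycle is returned as the pair
`(i, k + 2)`. -/
def decode : List (Option (ZMod n)) → List (ZMod n × ℕ)
  | [] => []
  | some i :: w => (i, 2) :: decode w
  | none :: w => (decode w).modifyHead fun p => (p.1, p.2 + 1)

theorem decode_replicate_none (l : ℕ) :
    decode (List.replicate l (none : Option (ZMod n))) = [] := by
  induction l with
  | zero => rfl
  | succ l ih => simp [List.replicate_succ, decode, ih]

theorem decode_replicate_none_append (k : ℕ) (i : ZMod n) (w : List (Option (ZMod n))) :
    decode (List.replicate k none ++ some i :: w) = (i, k + 2) :: decode w := by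
  induction k with
  | zero => rfl
  | succ k ih => simp [List.replicate_succ, decode, ih, add_right_comm]

theorem exists_word [NeZero n] (M : Multiset (EdgeVec n))
    (hM : ∀ x ∈ M, ∃ i m, 2 ≤ m ∧ m < n ∧ x = loc i m) {l : ℕ}
    (hl : (M.map fun x => longCount x - 1).sum ≤ l) :
    ∃ w : List (Option (ZMod n)), w.length = l ∧ (decode w).map (fun p => loc p.1 p.2) = M := by
  induction M using Multiset.induction_on generalizing l with
  | empty => exact ⟨List.replicate l none, by simp, by simp [decode_replicate_none]⟩
  | cons x M ih =>
    obtain ⟨i, m, h2, hm, rfl⟩ := hM x (Multiset.mem_cons_self x M)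
    simp only [Multiset.map_cons, Multiset.sum_cons, longCount_loc i hm] at hl
    obtain ⟨w, hw, hwM⟩ := ih (fun y hy => hM y (Multiset.mem_cons_of_mem hy))
      (l := l - (m - 1)) (by omega)
    refine ⟨List.replicate (m - 2) none ++ some i :: w, ?_, ?_⟩
    · rw [List.length_append, List.length_replicate, List.length_cons]
      omega
    · rw [decode_replicate_none_append, Nat.sub_add_cancel h2, ← hwM]
      rfl

theorem encard_loc_multisets_le [NeZero n] (l : ℕ) :
    {M : Multiset (EdgeVec n) | (∀ x ∈ M, ∃ i m, 2 ≤ m ∧ m < n ∧ x = loc i m) ∧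
        (M.map fun x => longCount x - 1).sum ≤ l}.encard ≤ (((n + 1) ^ l : ℕ) : ℕ∞) := by
  have hsub : {M : Multiset (EdgeVec n) | (∀ x ∈ M, ∃ i m, 2 ≤ m ∧ m < n ∧ x = loc i m) ∧
      (M.map fun x => longCount x - 1).sum ≤ l} ⊆
      (fun w : List.Vector (Option (ZMod n)) l =>
        ((decode w.1).map fun p => loc p.1 p.2 : Multiset (EdgeVec n))) '' Set.univ := by
    rintro M ⟨hM, hl⟩
    obtain ⟨w, hw, hwM⟩ := exists_word M hM hl
    exact ⟨⟨w, hw⟩, Set.mem_univ _, hwM⟩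
  refine (Set.encard_le_encard hsub).trans ((Set.encard_image_le _ _).trans_eq ?_)
  rw [Set.encard_univ, ENat.card_eq_coe_fintype_card, card_vector, Fintype.card_option, ZMod.card]

/-! ### Counting covers -/

theorem long_loc_one (i v : ZMod n) : (loc i 1).long v = if loc v 1 = loc i 1 then 1 else 0 := by
  have hlong : ∀ j, (loc j 1).long v = if v = j then 1 else 0 := fun j => by simp [loc]
  by_cases hv : v = i
  · simp [hv, loc]
  · have hne : loc v 1 ≠ loc i 1 := fun h => by
      have hvi := congrArg (fun x => x.long v) h
      simp [hlong, hv] at hvi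
    rw [hlong, if_neg hv, if_neg hne]

theorem sum_long_triangles (s : Multiset (EdgeVec n)) (v : ZMod n) :
    ((s.filter IsTriangle).map fun x => x.long v).sum = s.count (loc v 1) := by
  rw [← Multiset.count_filter_of_pos (p := IsTriangle) ⟨v, rfl⟩, Multiset.count, ← sum_map_boole]
  refine congrArg _ (Multiset.map_congr rfl fun x hx => ?_)
  obtain ⟨i, rfl⟩ := (Multiset.mem_filter.1 hx).2
  exact long_loc_one i v

namespace IsCover

variable {s t : Multiset (EdgeVec n)}

-- The long edge at `v` lies in only one triangle, `loc v 1`, which therefore occurs as often as the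
-- other cycles leave that edge uncovered.
theorem eq_of_filter_not_isTriangle (hs : IsCover s) (ht : IsCover t)
    (h : (s.filter fun x => ¬ IsTriangle x) = t.filter fun x => ¬ IsTriangle x) : s = t := by
  have htriangles : ∀ {u : Multiset (EdgeVec n)}, IsCover u → ∀ v, u.count (loc v 1) +
      ((u.filter fun x => ¬ IsTriangle x).map fun x => x.long v).sum = 2 := fun {u} hu v => by
    rw [← sum_long_triangles, sum_map_filter_add_sum_map_filter_not, hu.sum_long]
  refine Multiset.ext.2 fun x => ?_
  by_cases hx : IsTriangle x
  · obtain ⟨v, rfl⟩ := hx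
    have hsv := htriangles hs v
    have htv := htriangles ht v
    rw [h] at hsv
    omega
  · rw [← Multiset.count_filter_of_pos (s := s) (p := fun x => ¬ IsTriangle x) hx, h,
      Multiset.count_filter_of_pos (p := fun x => ¬ IsTriangle x) hx]

variable [NeZero n]

theorem exists_eq_loc_of_not_isTriangle (h : IsCover s) (hx : x ∈ localPart s)
    (hxt : ¬ IsTriangle x) : ∃ i m, 2 ≤ m ∧ m < n ∧ x = loc i m := by
  obtain ⟨i, m, h0, hm, rfl⟩ := h.exists_eq_loc hx
  have h1 : m ≠ 1 := fun h1 => hxt ⟨i, h1 ▸ rfl⟩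
  exact ⟨i, m, by omega, hm, rfl⟩

end IsCover

theorem encard_covers_le [NeZero n] {q : ℕ} (hq : 0 < q) (r : ℕ) :
    {s : Multiset (EdgeVec n) | IsCover s ∧ Multiset.card (globalPart s) = q ∧
        Multiset.card (localPart s) + r = n}.encard ≤
      (((q * n).choose (2 * r) * 4 ^ q * (n + 1) ^ (2 * r) : ℕ) : ℕ∞) := by
  rw [Nat.cast_mul]
  refine le_trans ?_
    (mul_le_mul' (encard_even_multisets_le q (2 * r)) (encard_loc_multisets_le (2 * r)))
  rw [← Set.encard_prod]
  refine Set.encard_le_encard_of_injOn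
    (f := fun s => (globalPart s, (localPart s).filter fun x => ¬ IsTriangle x)) ?_ ?_
  · rintro s ⟨hs, hsq, hsr⟩
    refine ⟨⟨hsq, fun x hx => (hs.isCycle x (Multiset.mem_of_mem_filter hx)).toIsEven,
      hs.sum_shortCount_globalPart hsr⟩, fun x hx => ?_,
      (sum_map_filter_le _ _ _).trans
        (hs.sum_longCount_sub_one_le hsr (hsq ▸ hq))⟩
    exact hs.exists_eq_loc_of_not_isTriangle (Multiset.mem_filter.1 hx).1
      (Multiset.mem_filter.1 hx).2
  · rintro s ⟨hs, -⟩ t ⟨ht, -⟩ hst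
    obtain ⟨hglobal, hlocal⟩ := Prod.mk.inj hst
    refine hs.eq_of_filter_not_isTriangle ht ?_
    rw [← localPart_add_globalPart s, ← localPart_add_globalPart t, Multiset.filter_add,
      Multiset.filter_add, hlocal, hglobal]

end EdgeVec

/-! ### From subgraphs to edge vectors -/

/-- The square of the `n`-cycle, so that `antiprism k` is `cycleSquare (2 * k)` by definition. -/
def cycleSquare (n : ℕ) : SimpleGraph (ZMod n) :=
  SimpleGraph.fromRel fun v w => w = v + 1 ∨ w = v + 2

/-- The edge vector of a subgraph of the square of the `n`-cycle. -/
noncomputable def edgeVec {n : ℕ} (C : (cycleSquare n).Subgraph) : EdgeVec n where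
  short i := if C.Adj i (i + 1) then 1 else 0
  long i := if C.Adj i (i + 2) then 1 else 0

section CycleSquare

variable {n : ℕ} {C D : (cycleSquare n).Subgraph} {v w : ZMod n}

theorem cycleSquare_adj_cases (h : (cycleSquare n).Adj v w) :
    w = v + 1 ∨ v = w + 1 ∨ w = v + 2 ∨ v = w + 2 := by
  have hrel := ((SimpleGraph.fromRel_adj _ v w).1 h).2
  tauto

theorem short_edgeVec_eq_one : (edgeVec C).short v = 1 ↔ C.Adj v (v + 1) := by
  simp [edgeVec]

theorem long_edgeVec_eq_one : (edgeVec C).long v = 1 ↔ C.Adj v (v + 2) := by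
  simp [edgeVec]

theorem neighborSet_eq_filter (C : (cycleSquare n).Subgraph) (v : ZMod n) :
    C.neighborSet v =
      (({v + 1, v - 1, v + 2, v - 2} : Finset (ZMod n)).filter fun w => C.Adj v w) := by
  ext w
  simp only [Subgraph.mem_neighborSet, Finset.coe_filter, Finset.mem_insert,
    Finset.mem_singleton, Set.mem_ofPred_eq, eq_sub_iff_add_eq]
  refine ⟨fun h => ⟨?_, h⟩, fun h => h.2⟩
  have hcases := cycleSquare_adj_cases h.adj_sub
  grind

theorem ncard_neighborSet (hn : 5 ≤ n) (C : (cycleSquare n).Subgraph) (v : ZMod n) :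
    (C.neighborSet v).ncard = (edgeVec C).deg v := by
  have h1 := natCast_ne_zero_of_lt (n := n) (t := 1) (by omega) (by omega)
  have h2 := natCast_ne_zero_of_lt (n := n) (t := 2) (by omega) (by omega)
  have h3 := natCast_ne_zero_of_lt (n := n) (t := 3) (by omega) (by omega)
  have h4 := natCast_ne_zero_of_lt (n := n) (t := 4) (by omega) (by omega)
  push_cast at h1 h2 h3 h4
  rw [neighborSet_eq_filter, Set.ncard_coe_finset, Finset.card_filter, Finset.sum_insert,
    Finset.sum_insert, Finset.sum_insert, Finset.sum_singleton]
  · simp only [EdgeVec.deg, edgeVec, sub_add_cancel, C.adj_comm v (v - 1), C.adj_comm v (v - 2)]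
    ring
  · simp only [Finset.mem_singleton]
    exact fun h => h4 (by linear_combination h)
  · simp only [Finset.mem_insert, Finset.mem_singleton, not_or]
    exact ⟨fun h => h3 (by linear_combination -h), fun h => h1 (by linear_combination h)⟩
  · simp only [Finset.mem_insert, Finset.mem_singleton, not_or]
    exact ⟨fun h => h2 (by linear_combination h), fun h => h1 (by linear_combination -h),
      fun h => h3 (by linear_combination h)⟩

theorem IsCycleSubgraph.deg_edgeVec (hn : 5 ≤ n) (hC : IsCycleSubgraph C) (v : ZMod n) :
    (edgeVec C).deg v = if v ∈ C.verts then 2 else 0 := by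
  rw [← ncard_neighborSet hn]
  split_ifs with hv
  · exact hC.2 v hv
  · have hempty : C.neighborSet v = ∅ :=
      Set.eq_empty_of_forall_notMem fun w hw => hv (C.edge_vert hw)
    rw [hempty, Set.ncard_empty]

theorem IsCycleSubgraph.deg_edgeVec_ne_zero (hn : 5 ≤ n) (hC : IsCycleSubgraph C) :
    (edgeVec C).deg v ≠ 0 ↔ v ∈ C.verts := by
  rw [hC.deg_edgeVec hn]
  simp

theorem mem_of_reachable {V : Type*} {G : SimpleGraph V} {W : Set V}
    (hW : ∀ a b, G.Adj a b → a ∈ W → b ∈ W) {a b : V} (h : G.Reachable a b) (ha : a ∈ W) :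
    b ∈ W := by
  obtain ⟨p⟩ := h
  induction p with
  | nil => exact ha
  | cons hadj _ ih => exact ih (hW _ _ hadj ha)

theorem IsCycleSubgraph.isCycle_edgeVec (hn : 5 ≤ n) (hC : IsCycleSubgraph C) :
    (edgeVec C).IsCycle where
  short_le i := by simp only [edgeVec]; split_ifs <;> omega
  long_le i := by simp only [edgeVec]; split_ifs <;> omega
  even_deg i := by rw [hC.deg_edgeVec hn]; split_ifs <;> decide
  deg_le i := by rw [hC.deg_edgeVec hn]; split_ifs <;> omega
  exists_deg_eq_two := by
    obtain ⟨v, hv⟩ := hC.1.nonempty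
    exact ⟨v, by rw [hC.deg_edgeVec hn, if_pos hv]⟩
  connected W hshort hlong i j hi hj hiW := by
    rw [hC.deg_edgeVec_ne_zero hn] at hi hj
    have closed : ∀ v w, C.Adj v w → v ∈ W → w ∈ W := fun v w hvw => by
      rcases cycleSquare_adj_cases hvw.adj_sub with rfl | rfl | rfl | rfl
      · exact (hshort v (short_edgeVec_eq_one.2 hvw)).1
      · exact (hshort w (short_edgeVec_eq_one.2 hvw.symm)).2
      · exact (hlong v (long_edgeVec_eq_one.2 hvw)).1
      · exact (hlong w (long_edgeVec_eq_one.2 hvw.symm)).2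
    exact mem_of_reachable (W := {a : C.verts | (a : ZMod n) ∈ W})
      (fun a b hab => closed a b hab) (hC.1.preconnected ⟨i, hi⟩ ⟨j, hj⟩) hiW

theorem adj_of_edgeVec_eq (h : edgeVec C = edgeVec D) (hvw : C.Adj v w) : D.Adj v w := by
  rcases cycleSquare_adj_cases hvw.adj_sub with rfl | rfl | rfl | rfl
  · rwa [← short_edgeVec_eq_one, ← h, short_edgeVec_eq_one]
  · rwa [D.adj_comm, ← short_edgeVec_eq_one, ← h, short_edgeVec_eq_one, C.adj_comm]
  · rwa [← long_edgeVec_eq_one, ← h, long_edgeVec_eq_one]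
  · rwa [D.adj_comm, ← long_edgeVec_eq_one, ← h, long_edgeVec_eq_one, C.adj_comm]

theorem injOn_edgeVec (hn : 5 ≤ n) :
    {C : (cycleSquare n).Subgraph | IsCycleSubgraph C}.InjOn edgeVec := by
  intro C hC D hD h
  refine Subgraph.ext (Set.ext fun v => ?_) ?_
  · rw [← hC.deg_edgeVec_ne_zero hn, h, hD.deg_edgeVec_ne_zero hn]
  · ext v w
    exact ⟨adj_of_edgeVec_eq h, adj_of_edgeVec_eq h.symm⟩

theorem isCover_map_edgeVec (hn : 5 ≤ n) {S : Multiset (cycleSquare n).Subgraph}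
    (hS : IsCDC (cycleSquare n) S) : EdgeVec.IsCover (S.map edgeVec) where
  isCycle x hx := by
    obtain ⟨C, hC, rfl⟩ := Multiset.mem_map.1 hx
    exact (hS.1 C hC).isCycle_edgeVec hn
  sum_short v := by
    have h1 := natCast_ne_zero_of_lt (n := n) (t := 1) (by omega) (by omega)
    rw [Multiset.map_map, ← hS.2 s(v, v + 1) (by simpa [cycleSquare] using h1), ← sum_map_boole]
    rfl
  sum_long v := by
    have h2 := natCast_ne_zero_of_lt (n := n) (t := 2) (by omega) (by omega)
    rw [Multiset.map_map, ← hS.2 s(v, v + 2) (by simpa [cycleSquare] using h2), ← sum_map_boole]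
    rfl

theorem statement_7_general {c : ℕ} (hc2 : c ≠ 2) (hn : 2 * c + 5 ≤ n) :
    {S : Multiset (cycleSquare n).Subgraph |
        IsCDC (cycleSquare n) S ∧ Multiset.card S = n + 2 - c}.encard ≤
      ((n.choose (2 * (c - 1)) * 4 * (n + 1) ^ (2 * (c - 1)) +
        (2 * n).choose (2 * c) * 16 * (n + 1) ^ (2 * c) : ℕ) : ℕ∞) := by
  have : NeZero n := ⟨by omega⟩
  let covers (q r : ℕ) : Set (Multiset (EdgeVec n)) :=
    {s | EdgeVec.IsCover s ∧ Multiset.card (EdgeVec.globalPart s) = q ∧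
      Multiset.card (EdgeVec.localPart s) + r = n}
  have hmaps : ∀ S, IsCDC (cycleSquare n) S ∧ Multiset.card S = n + 2 - c →
      S.map edgeVec ∈ covers 1 (c - 1) ∪ covers 2 c := fun S ⟨hS, hcard⟩ => by
    have hcover := isCover_map_edgeVec (by omega) hS
    exact (hcover.card_globalPart hc2 hn (by rw [Multiset.card_map, hcard]; omega)).imp
      (fun h => ⟨hcover, h⟩) fun h => ⟨hcover, h⟩
  have hinj := (injOn_multiset_map (injOn_edgeVec (n := n) (by omega))).mono
    fun S (hS : IsCDC _ S ∧ Multiset.card S = n + 2 - c) => hS.1.1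
  calc _ ≤ (covers 1 (c - 1) ∪ covers 2 c).encard := Set.encard_le_encard_of_injOn hmaps hinj
    _ ≤ (covers 1 (c - 1)).encard + (covers 2 c).encard := Set.encard_union_le _ _
    _ ≤ _ := by
      rw [Nat.cast_add]
      refine add_le_add ?_ (EdgeVec.encard_covers_le two_pos c)
      simpa using EdgeVec.encard_covers_le (n := n) one_pos (c - 1)

end CycleSquare

/-! ### The numerical bound -/

theorem choose_le_exp_mul_div_pow (n k : ℕ) :
    (n.choose k : ℝ) ≤ (Real.exp 1 * n / k) ^ k := by
  rcases k.eq_zero_or_pos with rfl | hk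
  · simp
  have hk' : (k : ℝ) ≠ 0 := Nat.cast_ne_zero.2 hk.ne'
  calc (n.choose k : ℝ) ≤ (n : ℝ) ^ k / k.factorial := Nat.choose_le_pow_div k n
    _ = (k : ℝ) ^ k / k.factorial * (n / k) ^ k := by rw [div_pow]; field_simp [hk']
    _ ≤ Real.exp k * (n / k) ^ k := by
      gcongr
      exact Real.pow_div_factorial_le_exp _ k.cast_nonneg k
    _ = (Real.exp 1 * n / k) ^ k := by rw [mul_div_assoc, mul_pow, Real.exp_one_pow]

theorem choose_le_choose_two_mul {n : ℕ} (hn : 2 ≤ n) (k : ℕ) :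
    n.choose k ≤ (2 * n).choose (k + 2) :=
  calc n.choose k ≤ (n + 2).choose (k + 2) := by
        rw [Nat.choose_succ_succ, Nat.choose_succ_succ]
        omega
    _ ≤ (2 * n).choose (k + 2) := Nat.choose_le_choose _ (by omega)

theorem two_mul_succ_pow_le {n c : ℕ} (hc : 0 < c) (hn : 4 ≤ n) :
    2 * (n + 1) ^ (2 * c) ≤ n ^ (3 * c) :=
  calc 2 * (n + 1) ^ (2 * c) ≤ 2 ^ c * ((n + 1) ^ 2) ^ c := by
        rw [pow_mul]
        gcongr
        exact le_self_pow₀ one_le_two hc.ne'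
    _ = (2 * (n + 1) ^ 2) ^ c := (mul_pow _ _ _).symm
    _ ≤ (n ^ 3) ^ c := by
      gcongr
      nlinarith [Nat.mul_le_mul hn (Nat.mul_le_mul hn hn)]
    _ = n ^ (3 * c) := (pow_mul _ _ _).symm

theorem choose_sum_le_partition_bound {n c : ℕ} (hc : 0 < c) (hn : 4 ≤ n) :
    ((n.choose (2 * (c - 1)) * 4 * (n + 1) ^ (2 * (c - 1)) +
        (2 * n).choose (2 * c) * 16 * (n + 1) ^ (2 * c) : ℕ) : ℝ) ≤
      4 * (Real.exp 1 / c) ^ (2 * c) * (3 * c + 1) *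
        (Fintype.card (Nat.Partition (3 * c))) * (n : ℝ) ^ (5 * c) := by
  have hfirst : n.choose (2 * (c - 1)) * 4 * (n + 1) ^ (2 * (c - 1)) ≤
      (2 * n).choose (2 * c) * 4 * (n + 1) ^ (2 * c) := by
    have hchoose := choose_le_choose_two_mul (by omega : 2 ≤ n) (2 * (c - 1))
    rw [(by omega : 2 * (c - 1) + 2 = 2 * c)] at hchoose
    gcongr <;> omega
  have hchoose : ((2 * n).choose (2 * c) : ℝ) ≤ (Real.exp 1 / c) ^ (2 * c) * n ^ (2 * c) := by
    refine (choose_le_exp_mul_div_pow _ _).trans_eq ?_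
    rw [← mul_pow]
    push_cast
    congr 1
    field_simp
  have hpow : 2 * ((n : ℝ) + 1) ^ (2 * c) ≤ n ^ (3 * c) := by
    exact_mod_cast two_mul_succ_pow_le hc hn
  have hpartition : (1 : ℝ) ≤ Fintype.card (Nat.Partition (3 * c)) := by
    exact_mod_cast Fintype.card_pos
  have hc1 : (1 : ℝ) ≤ c := by exact_mod_cast hc
  calc _ ≤ (((2 * n).choose (2 * c) * 20 * (n + 1) ^ (2 * c) : ℕ) : ℝ) :=
        Nat.cast_le.2 (by linarith)
    _ = (2 * n).choose (2 * c) * 10 * (2 * ((n : ℝ) + 1) ^ (2 * c)) := by push_cast; ring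
    _ ≤ (Real.exp 1 / c) ^ (2 * c) * n ^ (2 * c) * 10 * n ^ (3 * c) := by gcongr
    _ = 4 * (Real.exp 1 / c) ^ (2 * c) * (5 / 2) * 1 * (n : ℝ) ^ (5 * c) := by ring
    _ ≤ _ := by
      gcongr
      linarith

/-- For a positive integer `c ≠ 2` and the antiprism `A` on `n = 2k` vertices with
`k > 3c+3`, the number of CDCs of `A` of size exactly `n+2-c` is at most
`4·(e/c)^{2c}·(3c+1)·p(3c)·n^{5c}`, where `p` is the integer partition function;
in particular it is at most `f(c)·n^{5c}` with `f` depending only on `c`. -/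
theorem statement_7 (c k : ℕ) (hc : 0 < c) (hc2 : c ≠ 2) (hk : 3 * c + 3 < k) :
    ({S : Multiset (antiprism k).Subgraph |
        IsCDC (antiprism k) S ∧ Multiset.card S = 2 * k + 2 - c}.ncard : ℝ) ≤
      4 * (Real.exp 1 / c) ^ (2 * c) * (3 * c + 1) *
        (Fintype.card (Nat.Partition (3 * c))) * ((2 * k : ℕ) : ℝ) ^ (5 * c) :=
  (Nat.cast_le.2 (Set.encard_le_coe_iff_finite_ncard_le.1
    (statement_7_general (n := 2 * k) hc2 (by omega))).2).trans
    (choose_sum_le_partition_bound hc (by omega))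
end
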